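/- Let φ_ε be a solution of the nonlinear eigenvalue problem (EV_ε), and set ā_ε = (ε a*_ε / 2)^{1/2}. Then there exists 0 < γ̃ < 1 such that, for every m ∈ εℤⁿ ∩ Ω, the oscillation of φ_ε over the annulus B_{ε/2}(m) \ B_{ā_ε}(m) is o(ε^{γ̃}). -/

import Mathlib

open Set Filter Metric MeasureTheory Topology Asymptotics

noncomputable section

/-- Euclidean space ℝⁿ. -/
abbrev Eucl (n : ℕ) := EuclideanSpace ℝ (Fin n)

/-- The points of the lattice `εℤⁿ`. -/
def latticePts (n : ℕ) (ε : ℝ) : Set (Eucl n) :=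
  {m | ∀ i, ∃ z : ℤ, m i = ε * (z : ℝ)}

/-- The union of closed balls of radius `a` centered at the lattice points `εℤⁿ`
(the periodic holes `T_{a_ε}`). -/
def holes (n : ℕ) (ε a : ℝ) : Set (Eucl n) :=
  ⋃ m ∈ latticePts n ε, closedBall m a

/-- The Laplacian of a function on ℝⁿ (sum of its second partial derivatives). -/
def lap {n : ℕ} (u : Eucl n → ℝ) (x : Eucl n) : ℝ :=
  ∑ i, fderiv ℝ (fun y => fderiv ℝ u y (EuclideanSpace.single i 1)) x
    (EuclideanSpace.single i 1)

/-- The harmonic capacity of a compact set, via the Dirichlet energy characterization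
(which agrees with the flux of the capacitary potential through the boundary). -/
def capacity (n : ℕ) (K : Set (Eucl n)) : ℝ :=
  sInf {c | ∃ v : Eucl n → ℝ, ContDiff ℝ (⊤ : ℕ∞) v ∧ HasCompactSupport v ∧
    (∀ x ∈ K, 1 ≤ v x) ∧ c = ∫ x, ‖fderiv ℝ v x‖ ^ 2}

/-- The critical scale `a*_ε = ε^(n/(n-2))` (for `n ≥ 3`). -/
def aStar (n : ℕ) (ε : ℝ) : ℝ := ε ^ ((n : ℝ) / ((n : ℝ) - 2))

/-- A set has smooth boundary: it is the strict sublevel set of a smooth function with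
nonvanishing differential on the boundary. -/
def HasSmoothBoundary {n : ℕ} (Ω : Set (Eucl n)) : Prop :=
  ∃ f : Eucl n → ℝ, ContDiff ℝ (⊤ : ℕ∞) f ∧ Ω = {x | f x < 0} ∧
    ∀ x ∈ frontier Ω, fderiv ℝ f x ≠ 0

/-- The heat operator `H[ψ] = Δψ - ∂_t ψ` applied to a space-time function. -/
def heatOp {n : ℕ} (ψ : Eucl n → ℝ → ℝ) (x : Eucl n) (t : ℝ) : ℝ :=
  lap (fun y => ψ y t) x - deriv (fun s => ψ x s) t

/-- `u` is a viscosity supersolution of `F[u] = 0` on `Q`: whenever a smooth test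
function touches `u` from below at a point of `Q`, the operator evaluated on the test
function is `≤ 0` there. -/
def ViscSupersol {n : ℕ} (F : (Eucl n → ℝ → ℝ) → Eucl n → ℝ → ℝ)
    (Q : Set (Eucl n × ℝ)) (u : Eucl n → ℝ → ℝ) : Prop :=
  ∀ ψ : Eucl n → ℝ → ℝ, ContDiff ℝ (⊤ : ℕ∞) (fun p : Eucl n × ℝ => ψ p.1 p.2) →
    ∀ p ∈ Q, ψ p.1 p.2 = u p.1 p.2 → (∀ᶠ q in 𝓝[Q] p, ψ q.1 q.2 ≤ u q.1 q.2) →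
      F ψ p.1 p.2 ≤ 0

/-- `u` is a viscosity subsolution of `F[u] = 0` on `Q`. -/
def ViscSubsol {n : ℕ} (F : (Eucl n → ℝ → ℝ) → Eucl n → ℝ → ℝ)
    (Q : Set (Eucl n × ℝ)) (u : Eucl n → ℝ → ℝ) : Prop :=
  ∀ ψ : Eucl n → ℝ → ℝ, ContDiff ℝ (⊤ : ℕ∞) (fun p : Eucl n × ℝ => ψ p.1 p.2) →
    ∀ p ∈ Q, ψ p.1 p.2 = u p.1 p.2 → (∀ᶠ q in 𝓝[Q] p, u q.1 q.2 ≤ ψ q.1 q.2) →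
      0 ≤ F ψ p.1 p.2

/-- The highly oscillating obstacle `φ_ε = φ · χ_{T_{a_ε}}`. -/
def oscObstacle (n : ℕ) (ε a : ℝ) (φ : Eucl n → ℝ → ℝ) : Eucl n → ℝ → ℝ :=
  fun x t => (holes n ε a).indicator (fun y => φ y t) x

/-- `u` is a viscosity supersolution of the heat equation on `Q_T = Ω × (0,T]`, above the
obstacle `obst`, vanishing on the lateral boundary, with initial data `g`. -/
def IsSupersolHeatObstacle {n : ℕ} (Ω : Set (Eucl n)) (T : ℝ)
    (obst : Eucl n → ℝ → ℝ) (g : Eucl n → ℝ) (u : Eucl n → ℝ → ℝ) : Prop :=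
  ViscSupersol heatOp (Ω ×ˢ Ioc 0 T) u ∧
  (∀ x ∈ frontier Ω, ∀ t ∈ Ioc (0:ℝ) T, u x t = 0) ∧
  (∀ x ∈ Ω, ∀ t ∈ Ioc (0:ℝ) T, obst x t ≤ u x t) ∧
  (∀ x ∈ Ω, u x 0 = g x)

/-- `u` is the least viscosity supersolution of the obstacle problem. -/
def IsLeastSupersolHeatObstacle {n : ℕ} (Ω : Set (Eucl n)) (T : ℝ)
    (obst : Eucl n → ℝ → ℝ) (g : Eucl n → ℝ) (u : Eucl n → ℝ → ℝ) : Prop :=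
  IsSupersolHeatObstacle Ω T obst g u ∧
  ∀ v, IsSupersolHeatObstacle Ω T obst g v →
    ∀ x ∈ Ω, ∀ t ∈ Ioc (0:ℝ) T, u x t ≤ v x t

/-- Difference quotient of size `ε` in direction `e`. -/
def dquot {n : ℕ} (ε : ℝ) (e : Eucl n) (f : Eucl n → ℝ) (x : Eucl n) : ℝ :=
  (f (x + ε • e) - f x) / ε

/-- Norm of the discrete gradient `‖Δ^ε_e f(x)‖ = (Σ_i |Δ^ε_{e_i} f(x)|²)^{1/2}`. -/
def dgradNorm {n : ℕ} (ε : ℝ) (f : Eucl n → ℝ) (x : Eucl n) : ℝ :=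
  Real.sqrt (∑ i, (dquot ε (EuclideanSpace.single i 1) f x) ^ 2)

/-- A unit lattice direction `e ∈ ℤⁿ`, `|e| = 1`. -/
def UnitLatticeDir (n : ℕ) (e : Eucl n) : Prop :=
  e ∈ latticePts n 1 ∧ ‖e‖ = 1

/-- The `ε`-periodic corrector : `Δw = k` outside the holes of radius `a`,
`w = 1` on the holes. -/
def IsCorrector (n : ℕ) (ε a k : ℝ) (w : Eucl n → ℝ) : Prop :=
  Continuous w ∧ ContDiffOn ℝ 2 w (holes n ε a)ᶜ ∧
  (∀ x ∉ holes n ε a, lap w x = k) ∧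
  (∀ x ∈ holes n ε a, w x = 1) ∧
  (∀ m ∈ latticePts n ε, ∀ x, w (x + m) = w x)

/-- `liminf_{ε→0} inf_{x} w_ε(x)`, computed in the extended reals. -/
def liminfInf (n : ℕ) (w : ℝ → Eucl n → ℝ) : EReal :=
  Filter.liminf (fun ε => ⨅ x, ((w ε x : ℝ) : EReal)) (𝓝[>] (0:ℝ))

/-- Solution of the nonlinear eigenvalue problem (EV_ε) in the perforated domain
with holes of radius `a`, extended by zero outside `Ω_{a}`. -/
def IsEVSol (n : ℕ) (Ω : Set (Eucl n)) (ε a p : ℝ) (φ : Eucl n → ℝ) : Prop :=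
  ContinuousOn φ (closure Ω) ∧
  ContDiffOn ℝ 2 φ (Ω \ holes n ε a) ∧
  (∀ x ∈ Ω \ holes n ε a, lap φ x + φ x ^ p = 0) ∧
  (∀ x ∈ Ω \ holes n ε a, 0 < φ x) ∧
  (∀ x, x ∉ Ω \ holes n ε a → φ x = 0)

/-- Elliptic viscosity supersolution of `F[u] = 0` on `D`. -/
def ViscSupersolE {n : ℕ} (F : (Eucl n → ℝ) → Eucl n → ℝ) (D : Set (Eucl n))
    (u : Eucl n → ℝ) : Prop :=
  ∀ ψ : Eucl n → ℝ, ContDiff ℝ (⊤ : ℕ∞) ψ → ∀ x ∈ D, ψ x = u x →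
    (∀ᶠ y in 𝓝[D] x, ψ y ≤ u y) → F ψ x ≤ 0

/-- Elliptic viscosity subsolution of `F[u] = 0` on `D`. -/
def ViscSubsolE {n : ℕ} (F : (Eucl n → ℝ) → Eucl n → ℝ) (D : Set (Eucl n))
    (u : Eucl n → ℝ) : Prop :=
  ∀ ψ : Eucl n → ℝ, ContDiff ℝ (⊤ : ℕ∞) ψ → ∀ x ∈ D, ψ x = u x →
    (∀ᶠ y in 𝓝[D] x, u y ≤ ψ y) → 0 ≤ F ψ x

/-- The ε-periodic smooth cutoff `ξ` used for the initial data of (PME_ε). -/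
def PMECutoff (n : ℕ) (ε : ℝ) (ξ : Eucl n → ℝ) : Prop :=
  ContDiff ℝ (⊤ : ℕ∞) ξ ∧ (∀ x, 0 ≤ ξ x ∧ ξ x ≤ 1) ∧
  (∀ x ∈ holes n ε (aStar n ε), ξ x = 0) ∧
  (∀ x ∉ holes n ε (ε ^ (((n : ℝ) - 1) / ((n : ℝ) - 2))), ξ x = 1) ∧
  (∀ x ∈ holes n ε (ε ^ (((n : ℝ) - 1) / ((n : ℝ) - 2))) \ holes n ε (aStar n ε),
    lap ξ x = 0) ∧
  (∀ x, lap ξ x ≤ 0) ∧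
  (∀ i : Fin n, ∀ x, ξ (x + ε • EuclideanSpace.single i 1) = ξ x)

/-- The smooth initial data `g` for (PME_ε): vanishing outside `Ω` and with
nondegenerate gradient on `∂Ω`. -/
def PMEData (n : ℕ) (Ω : Set (Eucl n)) (δ₀ C : ℝ) (g : Eucl n → ℝ) : Prop :=
  ContDiff ℝ (⊤ : ℕ∞) g ∧ HasCompactSupport g ∧ tsupport g ⊆ closure Ω ∧
  ∀ x ∈ frontier Ω, δ₀ < ‖fderiv ℝ g x‖ ∧ ‖fderiv ℝ g x‖ < C

/-- `u` solves the porous medium problem (PME_ε) in the perforated domain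
`Q_{T,a*_ε} = Ω_{a*_ε} × (0,T]`, with lateral boundary value 0 and initial data `gε`. -/
def IsPMESol (n : ℕ) (Ω : Set (Eucl n)) (T ε m : ℝ) (gε : Eucl n → ℝ)
    (u : Eucl n → ℝ → ℝ) : Prop :=
  ContinuousOn (fun pr : Eucl n × ℝ => u pr.1 pr.2)
    (closure (Ω \ holes n ε (aStar n ε)) ×ˢ Icc 0 T) ∧
  (∀ x ∈ Ω \ holes n ε (aStar n ε), ∀ t ∈ Ioc (0:ℝ) T,
    lap (fun y => u y t ^ m) x - deriv (fun s => u x s) t = 0) ∧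
  (∀ x ∈ frontier (Ω \ holes n ε (aStar n ε)), ∀ t ∈ Ioc (0:ℝ) T, u x t = 0) ∧
  (∀ x ∈ Ω \ holes n ε (aStar n ε), u x 0 = gε x)

/-!
Write `δ = ε ^ (1 / n)`. Comparison with a paraboloid bounds every solution by a constant `M`
independent of `ε`, and comparison with a radial barrier at an exterior ball bounds it linearly in
the distance to `∂Ω`; hence solutions are `O(δ)` within distance `2δ` of the boundary.

Deeper inside, reflect across the hyperplane equidistant from two points `x` and `y` of an annulus.
On the half of the ball of radius `r = δ ^ (n - 1)` around their midpoint that contains `x`, the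
solution `φ` lies below the reflection of `φ + M W` plus a quadratic barrier, where `W` is a
superharmonic sum of bubbles that is at least `1` on the holes: `M W` takes over where the reflected
`φ` vanishes in a hole. At the critical scale `a*_ε` the bubble centred at `m` is `O(ε)` outside
`B_{ā_ε}(m)`, and each of the other `O(δ ^ (-n)) = O(ε⁻¹)` bubbles meeting the ball is `O(ε²)`,
while the barrier costs `O(ε / r) = O(δ)`. So the oscillation is `O(ε ^ (1 / n))`.
-/

section LaplacianCalculus

open Laplacian Module RealInnerProductSpace

variable {E : Type*} [NormedAddCommGroup E] [InnerProductSpace ℝ E]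

theorem contDiff_inner_sub (c e : E) : ContDiff ℝ 2 fun z ↦ ⟪e, z - c⟫ :=
  contDiff_const.inner ℝ (contDiff_id.sub contDiff_const)

theorem fderiv_inner_sub (c e x : E) : fderiv ℝ (fun z ↦ ⟪e, z - c⟫) x = innerSL ℝ e :=
  ((innerSL ℝ e).hasFDerivAt.comp x ((hasFDerivAt_id x).sub_const c)).fderiv

theorem contDiff_norm_sub_sq (c : E) : ContDiff ℝ 2 fun z : E ↦ ‖z - c‖ ^ 2 :=
  (contDiff_id.sub contDiff_const).norm_sq ℝ

theorem fderiv_norm_sub_sq (c x : E) :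
    fderiv ℝ (fun z ↦ ‖z - c‖ ^ 2) x = 2 • innerSL ℝ (x - c) :=
  ((hasFDerivAt_id x).sub_const c).norm_sq.fderiv

theorem contDiffAt_norm_sub_sq_add_rpow (b q : ℝ) {c x : E} (hpos : 0 < ‖x - c‖ ^ 2 + b) :
    ContDiffAt ℝ 2 (fun z ↦ (‖z - c‖ ^ 2 + b) ^ q) x :=
  ((contDiff_norm_sub_sq c).add contDiff_const).contDiffAt.rpow_const_of_ne hpos.ne'

theorem inv_norm_sub_pow_eq_rpow {E : Type*} [SeminormedAddCommGroup E] (N : ℕ) (c z : E) :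
    (‖z - c‖ ^ N)⁻¹ = (‖z - c‖ ^ 2 + 0) ^ (-(N / 2 : ℝ)) := by
  rw [add_zero, Real.rpow_neg (by positivity), ← Real.rpow_natCast_mul (norm_nonneg _),
    ← Real.rpow_natCast]
  push_cast
  ring_nf

theorem contDiffAt_inv_norm_sub_pow (N : ℕ) {c x : E} (hx : 0 < ‖x - c‖) :
    ContDiffAt ℝ 2 (fun z ↦ (‖z - c‖ ^ N)⁻¹) x := by
  simp only [inv_norm_sub_pow_eq_rpow]
  exact contDiffAt_norm_sub_sq_add_rpow 0 _ (by positivity)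

variable [FiniteDimensional ℝ E] {ι : Type*} [Fintype ι] {f : E → ℝ} {x : E}

theorem laplacian_eq_sum_fderiv_fderiv (v : OrthonormalBasis ι ℝ E) (hf : ContDiffAt ℝ 2 f x) :
    Δ f x = ∑ i, fderiv ℝ (fun y ↦ fderiv ℝ f y (v i)) x (v i) := by
  have hf' : DifferentiableAt ℝ (fderiv ℝ f) x :=
    (hf.fderiv_right (m := 1) (by norm_num)).differentiableAt one_ne_zero
  simp only [InnerProductSpace.laplacian_eq_iteratedFDeriv_orthonormalBasis f v]
  refine Finset.sum_congr rfl fun i _ ↦ ?_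
  rw [iteratedFDeriv_two_apply, fderiv_clm_apply hf' (differentiableAt_const _)]
  simp

theorem lap_eq_laplacian {n : ℕ} {u : Eucl n → ℝ} {x : Eucl n} (hu : ContDiffAt ℝ 2 u x) :
    lap u x = Δ u x := by
  simp [lap, laplacian_eq_sum_fderiv_fderiv (EuclideanSpace.basisFun (Fin n) ℝ) hu]

theorem laplacian_eq_sum_deriv_deriv (v : OrthonormalBasis ι ℝ E) (hf : ContDiffAt ℝ 2 f x) :
    Δ f x = ∑ i, deriv (deriv fun t : ℝ ↦ f (x + t • v i)) 0 := by
  rw [laplacian_eq_sum_fderiv_fderiv v hf]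
  refine Finset.sum_congr rfl fun i _ ↦ ?_
  have hline (t : ℝ) : HasDerivAt (fun t : ℝ ↦ x + t • v i) (v i) t := by
    simpa using ((hasDerivAt_id t).smul_const (v i)).const_add x
  have hx : x + (0 : ℝ) • v i = x := by simp
  have hlim : Tendsto (fun t : ℝ ↦ x + t • v i) (𝓝 0) (𝓝 x) := by
    simpa only [hx] using (hline 0).continuousAt.tendsto
  have hderiv : (deriv fun t : ℝ ↦ f (x + t • v i)) =ᶠ[𝓝 0]
      fun t ↦ fderiv ℝ f (x + t • v i) (v i) := by
    filter_upwards [hlim.eventually (hf.eventually (by simp))] with t ht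
    exact ((ht.differentiableAt two_ne_zero).hasFDerivAt.comp_hasDerivAt t (hline t)).deriv
  have hf' : DifferentiableAt ℝ (fun y ↦ fderiv ℝ f y (v i)) (x + (0 : ℝ) • v i) := by
    rw [hx]
    exact ((hf.fderiv_right (m := 1) (by norm_num)).differentiableAt one_ne_zero).clm_apply
      (differentiableAt_const _)
  have hcomp := (hf'.hasFDerivAt.comp_hasDerivAt 0 (hline 0)).deriv
  rw [hx] at hcomp
  rw [hderiv.deriv_eq, ← hcomp]
  rfl

theorem laplacian_const_add_mul (a b : ℝ) (hf : ContDiffAt ℝ 2 f x) :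
    Δ (fun z ↦ a + b * f z) x = b * Δ f x := by
  have hbf : ContDiffAt ℝ 2 (b • f) x := contDiffAt_const.smul hf
  have := (contDiffAt_const (c := a)).laplacian_add hbf
  rw [InnerProductSpace.laplacian_const, InnerProductSpace.laplacian_smul b hf] at this
  exact this.trans (zero_add _)

theorem laplacian_comp_affineIsometryEquiv (R : E ≃ᵃⁱ[ℝ] E) (hf : ContDiffAt ℝ 2 f (R x)) :
    Δ (f ∘ R) x = Δ f (R x) := by
  let v := stdOrthonormalBasis ℝ E
  have hR₂ : ContDiff ℝ 2 R := R.toAffineIsometry.toContinuousAffineMap.contDiff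
  rw [laplacian_eq_sum_deriv_deriv v (hf.comp x hR₂.contDiffAt),
    laplacian_eq_sum_deriv_deriv (v.map R.linearIsometryEquiv) hf]
  refine Finset.sum_congr rfl fun i _ ↦ ?_
  have hR (t : ℝ) : R (x + t • v i) = R x + t • R.linearIsometryEquiv (v i) := by
    simpa [add_comm] using R.map_vadd x (t • v i)
  simp [hR]

theorem laplacian_comp {g : ℝ → ℝ} (hg : ContDiffAt ℝ 2 g (f x)) (hf : ContDiffAt ℝ 2 f x) :
    Δ (g ∘ f) x =
      deriv (deriv g) (f x) * ‖fderiv ℝ f x‖ ^ 2 + deriv g (f x) * Δ f x := by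
  let v := stdOrthonormalBasis ℝ E
  have hg' : DifferentiableAt ℝ (deriv g) (f x) :=
    (hg.derivWithin (m := 1) (by norm_num)).differentiableAt one_ne_zero
  have hf' (i) : DifferentiableAt ℝ (fun y ↦ fderiv ℝ f y (v i)) x :=
    ((hf.fderiv_right (m := 1) (by norm_num)).differentiableAt one_ne_zero).clm_apply
      (differentiableAt_const _)
  have hfx : DifferentiableAt ℝ f x := hf.differentiableAt two_ne_zero
  have hgrad (i) : (fun y ↦ fderiv ℝ (g ∘ f) y (v i)) =ᶠ[𝓝 x]
      fun y ↦ deriv g (f y) * fderiv ℝ f y (v i) := by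
    filter_upwards [hf.eventually (by simp),
      hf.continuousAt.eventually (hg.eventually (by simp))] with y hfy hgy
    have := (hgy.differentiableAt two_ne_zero).hasDerivAt.comp_hasFDerivAt y
      (hfy.differentiableAt two_ne_zero).hasFDerivAt
    simpa [Function.comp_def] using congr($(this.fderiv) (v i))
  have hgf : HasFDerivAt (fun y ↦ deriv g (f y)) (deriv (deriv g) (f x) • fderiv ℝ f x) x :=
    hg'.hasDerivAt.comp_hasFDerivAt x hfx.hasFDerivAt
  rw [laplacian_eq_sum_fderiv_fderiv v (hg.comp x hf), laplacian_eq_sum_fderiv_fderiv v hf,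
    v.norm_dual, Finset.mul_sum, Finset.mul_sum, ← Finset.sum_add_distrib]
  refine Finset.sum_congr rfl fun i _ ↦ ?_
  rw [(hgrad i).fderiv_eq, fderiv_fun_mul hgf.differentiableAt (hf' i), hgf.fderiv]
  simp
  ring

theorem laplacian_inner_sub (c e x : E) : Δ (fun z ↦ ⟪e, z - c⟫) x = 0 := by
  rw [laplacian_eq_sum_fderiv_fderiv (stdOrthonormalBasis ℝ E) (contDiff_inner_sub c e).contDiffAt]
  simp [fderiv_inner_sub]

theorem laplacian_norm_sub_sq (c x : E) :
    Δ (fun z ↦ ‖z - c‖ ^ 2) x = 2 * finrank ℝ E := by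
  let v := stdOrthonormalBasis ℝ E
  have hsecond (i) : fderiv ℝ (fun y ↦ fderiv ℝ (fun z ↦ ‖z - c‖ ^ 2) y (v i)) x (v i) = 2 := by
    have hfirst : (fun y ↦ fderiv ℝ (fun z ↦ ‖z - c‖ ^ 2) y (v i)) =
        fun y ↦ 2 * ⟪v i, y - c⟫ := by
      ext y
      simp [fderiv_norm_sub_sq, inner_sub_left, mul_sub, real_inner_comm _ (v i)]
    rw [hfirst, fderiv_const_mul ((contDiff_inner_sub c (v i)).contDiffAt.differentiableAt
      two_ne_zero), fderiv_inner_sub]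
    simp
  rw [laplacian_eq_sum_fderiv_fderiv v (contDiff_norm_sub_sq c).contDiffAt]
  simp [hsecond, mul_comm]

theorem laplacian_inner_sub_sq (c e x : E) :
    Δ (fun z ↦ ⟪e, z - c⟫ ^ 2) x = 2 * ‖e‖ ^ 2 := by
  have hpow : deriv (fun t : ℝ ↦ t ^ 2) = fun t ↦ 2 * t := by ext; simp
  have hdouble (s : ℝ) : deriv (fun t : ℝ ↦ 2 * t) s = 2 := by simp
  have := laplacian_comp (g := fun t : ℝ ↦ t ^ 2) (contDiff_id.pow 2).contDiffAt
    (contDiff_inner_sub c e).contDiffAt (x := x)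
  simpa [Function.comp_def, laplacian_inner_sub, hpow, hdouble,
    fderiv_inner_sub] using this

theorem laplacian_norm_sub_sq_add_rpow (b q : ℝ) (c x : E) (hpos : 0 < ‖x - c‖ ^ 2 + b) :
    Δ (fun z ↦ (‖z - c‖ ^ 2 + b) ^ q) x =
      2 * q * (‖x - c‖ ^ 2 + b) ^ (q - 2) *
        (2 * (q - 1) * ‖x - c‖ ^ 2 + finrank ℝ E * (‖x - c‖ ^ 2 + b)) := by
  set s := ‖x - c‖ ^ 2 + b
  have hderiv : deriv (fun t : ℝ ↦ t ^ q) =ᶠ[𝓝 s] fun t ↦ q * t ^ (q - 1) := by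
    filter_upwards [lt_mem_nhds hpos] with t ht
    exact (Real.hasDerivAt_rpow_const (Or.inl ht.ne')).deriv
  have hderiv₂ : deriv (fun t : ℝ ↦ q * t ^ (q - 1)) s = q * ((q - 1) * s ^ (q - 2)) := by
    convert ((Real.hasDerivAt_rpow_const (p := q - 1) (Or.inl hpos.ne')).const_mul q).deriv using 3
    ring_nf
  have hpow : s ^ (q - 1) = s ^ (q - 2) * s := by
    rw [← Real.rpow_add_one hpos.ne']
    ring_nf
  have hshift : Δ (fun z ↦ ‖z - c‖ ^ 2 + b) x = 2 * finrank ℝ E := by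
    simpa [add_comm, laplacian_norm_sub_sq] using
      laplacian_const_add_mul b 1 (contDiff_norm_sub_sq c).contDiffAt (x := x)
  have hgrad : ‖fderiv ℝ (fun z ↦ ‖z - c‖ ^ 2 + b) x‖ ^ 2 = 4 * ‖x - c‖ ^ 2 := by
    rw [fderiv_add_const, fderiv_norm_sub_sq, ← Nat.cast_smul_eq_nsmul ℝ, norm_smul,
      innerSL_apply_norm]
    norm_num [mul_pow]
  have hcomp := laplacian_comp (f := fun z ↦ ‖z - c‖ ^ 2 + b) (g := fun t : ℝ ↦ t ^ q) (x := x)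
    (contDiffAt_id.rpow_const_of_ne hpos.ne')
    ((contDiff_norm_sub_sq c).add contDiff_const).contDiffAt
  rw [hgrad, hshift, hderiv.deriv_eq, hderiv.eq_of_nhds, hderiv₂, hpow] at hcomp
  refine hcomp.trans ?_
  ring

theorem laplacian_inv_norm_sub_pow_finrank {c x : E} (hx : 0 < ‖x - c‖) :
    Δ (fun z ↦ (‖z - c‖ ^ finrank ℝ E)⁻¹) x =
      2 * finrank ℝ E * (‖x - c‖ ^ (finrank ℝ E + 2))⁻¹ := by
  have hpow : (‖x - c‖ ^ 2 + 0) ^ (-(finrank ℝ E / 2 : ℝ) - 2) =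
      (‖x - c‖ ^ (finrank ℝ E + 2))⁻¹ * (‖x - c‖ ^ 2)⁻¹ := by
    rw [Real.rpow_sub (by positivity), ← inv_norm_sub_pow_eq_rpow, add_zero, Real.rpow_two, pow_add]
    field_simp
  simp only [inv_norm_sub_pow_eq_rpow (finrank ℝ E)]
  rw [laplacian_norm_sub_sq_add_rpow _ _ _ _ (by positivity), hpow]
  field_simp
  ring

end LaplacianCalculus

section Comparison

open Laplacian Module

variable {E : Type*} [NormedAddCommGroup E] [InnerProductSpace ℝ E] [FiniteDimensional ℝ E]

theorem deriv_deriv_nonpos_of_isLocalMax {g : ℝ → ℝ} {t : ℝ} (hg : ContinuousAt g t)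
    (hmax : IsLocalMax g t) : deriv (deriv g) t ≤ 0 := by
  by_contra! hpos
  have hmin := isLocalMin_of_deriv_deriv_pos hpos hmax.deriv_eq_zero hg
  have hconst : g =ᶠ[𝓝 t] fun _ ↦ g t := by
    filter_upwards [hmax, hmin] with s h₁ h₂ using le_antisymm h₁ h₂
  simp [hconst.deriv.deriv_eq] at hpos

theorem laplacian_nonpos_of_isLocalMax {f : E → ℝ} {x : E} (hf : ContDiffAt ℝ 2 f x)
    (hmax : IsLocalMax f x) : Δ f x ≤ 0 := by
  let v := stdOrthonormalBasis ℝ E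
  rw [laplacian_eq_sum_deriv_deriv v hf]
  refine Finset.sum_nonpos fun i _ ↦ ?_
  have hx : x + (0 : ℝ) • v i = x := by simp
  have hline : ContinuousAt (fun t : ℝ ↦ x + t • v i) 0 := by fun_prop
  have hf' : ContinuousAt f (x + (0 : ℝ) • v i) := hx.symm ▸ hf.continuousAt
  have hmax' : IsMaxFilter f (𝓝 (x + (0 : ℝ) • v i)) (x + (0 : ℝ) • v i) := hx.symm ▸ hmax
  exact deriv_deriv_nonpos_of_isLocalMax (hf'.comp (f := fun t : ℝ ↦ x + t • v i) hline)
    (hmax'.comp_tendsto (g := fun t : ℝ ↦ x + t • v i) hline)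

/- The perturbation `η‖z‖²` makes the Laplacian strictly positive at an interior maximum. -/
theorem le_of_laplacian_le_laplacian [Nontrivial E] {K : Set E} (hK : IsCompact K) {u w : E → ℝ}
    (hu : ContinuousOn u K) (hw : ContinuousOn w K)
    (hΔ : ∀ z ∈ K, w z < u z →
      K ∈ 𝓝 z ∧ ContDiffAt ℝ 2 u z ∧ ContDiffAt ℝ 2 w z ∧ Δ w z ≤ Δ u z)
    {x : E} (hx : x ∈ K) : u x ≤ w x := by
  by_contra! hlt
  obtain ⟨R, hR⟩ := hK.isBounded.exists_norm_le
  set η : ℝ := (u x - w x) / (2 * (R ^ 2 + 1))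
  have hη : 0 < η := by have := sub_pos.2 hlt; positivity
  have hηR : η * R ^ 2 < u x - w x := by
    have : η * (2 * (R ^ 2 + 1)) = u x - w x := div_mul_cancel₀ _ (by positivity)
    nlinarith [mul_nonneg hη.le (sq_nonneg R)]
  let q : E → ℝ := fun z ↦ ‖z - 0‖ ^ 2
  have hq : ContDiff ℝ 2 q := contDiff_norm_sub_sq 0
  obtain ⟨y, hy, hmax⟩ := hK.exists_isMaxOn ⟨x, hx⟩
    ((hu.sub hw).add (hq.continuous.const_smul η).continuousOn)
  have hlt_y : w y < u y := by
    have hxy : u x - w x + η * ‖x - 0‖ ^ 2 ≤ u y - w y + η * ‖y - 0‖ ^ 2 := hmax hx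
    have hyR : ‖y - 0‖ ^ 2 ≤ R ^ 2 := by
      rw [sub_zero]; exact pow_le_pow_left₀ (norm_nonneg y) (hR y hy) 2
    nlinarith [mul_le_mul_of_nonneg_left hyR hη.le, mul_nonneg hη.le (sq_nonneg ‖x - 0‖)]
  obtain ⟨hKy, huy, hwy, hΔy⟩ := hΔ y hy hlt_y
  have huwy : ContDiffAt ℝ 2 (u - w) y := huy.sub hwy
  have hqy : ContDiffAt ℝ 2 (η • q) y := contDiffAt_const.smul hq.contDiffAt
  have hle : Δ (u - w + η • q) y ≤ 0 :=
    laplacian_nonpos_of_isLocalMax (huwy.add hqy) (hmax.isLocalMax hKy)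
  rw [huwy.laplacian_add hqy, huy.laplacian_sub hwy,
    InnerProductSpace.laplacian_smul η hq.contDiffAt, laplacian_norm_sub_sq, smul_eq_mul] at hle
  have hdim : (0 : ℝ) < finrank ℝ E := mod_cast finrank_pos
  have : 0 < η * (2 * finrank ℝ E) := by positivity
  linarith

end Comparison

section ExteriorBall

/-- Every boundary point of `Ω` is touched from outside by a closed ball of radius `ρ`. -/
def UniformExteriorBall {X : Type*} [PseudoMetricSpace X] (Ω : Set X) (ρ : ℝ) : Prop :=
  ∀ ξ ∈ frontier Ω, ∃ y, dist ξ y = ρ ∧ ∀ z ∈ Ω, ρ ≤ dist z y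

theorem norm_image_sub_sub_fderiv_le_of_lipschitzOnWith {E F : Type*}
    [NormedAddCommGroup E] [NormedSpace ℝ E] [NormedAddCommGroup F] [NormedSpace ℝ F]
    {f : E → F} {s : Set E} {K : NNReal} (hs : Convex ℝ s) (hf : ∀ x ∈ s, DifferentiableAt ℝ f x)
    (hK : LipschitzOnWith K (fderiv ℝ f) s) {x y : E} (hx : x ∈ s) (hy : y ∈ s) :
    ‖f y - f x - fderiv ℝ f x (y - x)‖ ≤ K * ‖y - x‖ ^ 2 := by
  have hseg := hs.segment_subset hx hy
  have hderiv : ∀ z ∈ segment ℝ x y, ‖fderiv ℝ f z - fderiv ℝ f x‖ ≤ K * ‖y - x‖ := fun z hz ↦ by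
    refine (hK.norm_sub_le (hseg hz) hx).trans ?_
    gcongr
    simpa [dist_eq_norm] using (convex_closedBall x ‖y - x‖).segment_subset
      (mem_closedBall_self (norm_nonneg _)) (mem_closedBall_iff_norm.2 le_rfl) hz
  calc _ ≤ K * ‖y - x‖ * ‖y - x‖ := (convex_segment x y).norm_image_sub_le_of_norm_fderiv_le'
        (fun z hz ↦ hf z (hseg hz)) hderiv (left_mem_segment ℝ x y) (right_mem_segment ℝ x y)
    _ = _ := by ring

open RealInnerProductSpace Gradient

variable {E : Type*} [NormedAddCommGroup E] [InnerProductSpace ℝ E]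

theorem le_norm_sub_add_smul {v ξ z : E} {K ρ : ℝ} (hv : 0 < ‖v‖) (hρ : 0 ≤ ρ)
    (hK : 2 * K * ρ ≤ ‖v‖) (hz : ⟪v, z - ξ⟫ ≤ K * ‖z - ξ‖ ^ 2) :
    ρ ≤ ‖z - (ξ + (ρ / ‖v‖) • v)‖ := by
  have hsq : ‖z - (ξ + (ρ / ‖v‖) • v)‖ ^ 2 =
      ‖z - ξ‖ ^ 2 - 2 * (ρ / ‖v‖) * ⟪v, z - ξ⟫ + ρ ^ 2 := by
    rw [← sub_sub, norm_sub_sq_real, inner_smul_right, norm_smul,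
      Real.norm_of_nonneg (by positivity), real_inner_comm]
    field_simp
  have hinner : 2 * (ρ / ‖v‖) * ⟪v, z - ξ⟫ ≤ ‖z - ξ‖ ^ 2 := calc
    2 * (ρ / ‖v‖) * ⟪v, z - ξ⟫ ≤ 2 * (ρ / ‖v‖) * (K * ‖z - ξ‖ ^ 2) := by gcongr
    _ = 2 * K * ρ / ‖v‖ * ‖z - ξ‖ ^ 2 := by ring
    _ ≤ 1 * ‖z - ξ‖ ^ 2 := by gcongr; exact div_le_one_of_le₀ hK hv.le
    _ = ‖z - ξ‖ ^ 2 := one_mul _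
  exact le_of_sq_le_sq (by rw [hsq]; linarith) (norm_nonneg _)

theorem inner_gradient_sub_le_of_lipschitzOnWith [CompleteSpace E] {f : E → ℝ} {s : Set E}
    {K : NNReal} (hs : Convex ℝ s) (hf : ∀ x ∈ s, DifferentiableAt ℝ f x)
    (hK : LipschitzOnWith K (fderiv ℝ f) s) {x y : E} (hx : x ∈ s) (hy : y ∈ s) (hle : f y ≤ f x) :
    ⟪∇ f x, y - x⟫ ≤ K * ‖y - x‖ ^ 2 := by
  rw [inner_gradient_left]
  linarith [(abs_le.1 (norm_image_sub_sub_fderiv_le_of_lipschitzOnWith hs hf hK hx hy)).1]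

theorem exists_uniformExteriorBall_of_contDiff [FiniteDimensional ℝ E] {f : E → ℝ}
    (hf : ContDiff ℝ 2 f) (hb : Bornology.IsBounded {x | f x < 0})
    (hgrad : ∀ x ∈ frontier {x | f x < 0}, fderiv ℝ f x ≠ 0) :
    ∃ ρ > 0, UniformExteriorBall {x | f x < 0} ρ := by
  set Ω := {x | f x < 0}
  rcases (frontier Ω).eq_empty_or_nonempty with hempty | hne
  · exact ⟨1, one_pos, by simp [UniformExteriorBall, hempty]⟩
  have hf' : ContDiff ℝ 1 (fderiv ℝ f) := hf.fderiv_right (by norm_num)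
  obtain ⟨R, hR⟩ := hb.closure.subset_closedBall 0
  obtain ⟨K, hK⟩ := hf'.contDiffOn.exists_lipschitzOnWith one_ne_zero
    (convex_closedBall (0 : E) R) (isCompact_closedBall 0 R)
  obtain ⟨ξ₀, hξ₀, hmin⟩ := (hb.isCompact_closure.of_isClosed_subset isClosed_frontier
    frontier_subset_closure).exists_isMinOn hne hf'.continuous.norm.continuousOn
  have hmin_pos : 0 < ‖fderiv ℝ f ξ₀‖ := norm_pos_iff.2 (hgrad ξ₀ hξ₀)
  set ρ := ‖fderiv ℝ f ξ₀‖ / (2 * (K + 1))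
  have hρ : 0 < ρ := by positivity
  refine ⟨ρ, hρ, fun ξ hξ ↦ ?_⟩
  set v := ∇ f ξ
  have hmin_le : ‖fderiv ℝ f ξ₀‖ ≤ ‖v‖ :=
    (isMinOn_iff.1 hmin ξ hξ).trans_eq (LinearIsometryEquiv.norm_map _ _).symm
  have hv : 0 < ‖v‖ := hmin_pos.trans_le hmin_le
  have hKρ : 2 * K * ρ ≤ ‖v‖ := calc
    2 * K * ρ ≤ 2 * (K + 1) * ρ := by gcongr; linarith
    _ = ‖fderiv ℝ f ξ₀‖ := mul_div_cancel₀ _ (by positivity)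
    _ ≤ ‖v‖ := hmin_le
  refine ⟨ξ + (ρ / ‖v‖) • v, ?_, fun z hz ↦ ?_⟩
  · rw [dist_self_add_right, norm_smul, Real.norm_of_nonneg (by positivity),
      div_mul_cancel₀ _ hv.ne']
  · rw [dist_eq_norm]
    have hfξ : 0 ≤ f ξ := not_lt.1
      ((isOpen_lt hf.continuous continuous_const).frontier_eq ▸ hξ :).2
    have hfz : f z < 0 := hz
    exact le_norm_sub_add_smul hv hρ.le hKρ (inner_gradient_sub_le_of_lipschitzOnWith
      (convex_closedBall 0 R) (fun x _ ↦ hf.differentiable two_ne_zero x) hK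
      (hR (frontier_subset_closure hξ)) (hR (subset_closure hz)) (hfz.le.trans hfξ))

theorem HasSmoothBoundary.exists_uniformExteriorBall {n : ℕ} {Ω : Set (Eucl n)}
    (h : HasSmoothBoundary Ω) (hb : Bornology.IsBounded Ω) : ∃ ρ > 0, UniformExteriorBall Ω ρ := by
  obtain ⟨f, hf, rfl, hgrad⟩ := h
  exact exists_uniformExteriorBall_of_contDiff (hf.of_le (WithTop.coe_le_coe.2 le_top)) hb hgrad

end ExteriorBall

section TorsionSubsolution

open Laplacian Module

variable {E : Type*} [NormedAddCommGroup E] [InnerProductSpace ℝ E]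

/-- The radial barrier around an exterior ball `closedBall y ρ` of a domain contained in
`closedBall y D`: it vanishes on the sphere of radius `ρ`, and the factor is chosen so that
`Δ(exteriorBarrier) ≤ -Λ` on the domain. -/
def exteriorBarrier (Λ D ρ : ℝ) (y z : E) : ℝ :=
  Λ * D ^ (finrank ℝ E + 2) / (2 * finrank ℝ E * ρ ^ finrank ℝ E) *
    (1 - (ρ / ‖z - y‖) ^ finrank ℝ E)

section ExteriorBarrier

variable {Λ D ρ : ℝ} {y z : E}

theorem exteriorBarrier_eq (Λ D ρ : ℝ) (y : E) :
    exteriorBarrier Λ D ρ y = fun z ↦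
      Λ * D ^ (finrank ℝ E + 2) / (2 * finrank ℝ E * ρ ^ finrank ℝ E) +
        -(Λ * D ^ (finrank ℝ E + 2) / (2 * finrank ℝ E * ρ ^ finrank ℝ E) * ρ ^ finrank ℝ E) *
          (‖z - y‖ ^ finrank ℝ E)⁻¹ := by
  ext z
  rw [exteriorBarrier, div_pow]
  ring

theorem exteriorBarrier_nonneg (hΛ : 0 ≤ Λ) (hD : 0 ≤ D) (hρ : 0 < ρ) (hz : ρ ≤ ‖z - y‖) :
    0 ≤ exteriorBarrier Λ D ρ y z := by
  have hratio : ρ / ‖z - y‖ ≤ 1 := div_le_one_of_le₀ hz (norm_nonneg _)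
  exact mul_nonneg (by positivity) (sub_nonneg.2 (pow_le_one₀ (by positivity) hratio))

theorem contDiffAt_exteriorBarrier (hz : 0 < ‖z - y‖) :
    ContDiffAt ℝ 2 (exteriorBarrier Λ D ρ y) z := by
  rw [exteriorBarrier_eq]
  exact contDiffAt_const.add (contDiffAt_const.mul (contDiffAt_inv_norm_sub_pow _ hz))

variable [FiniteDimensional ℝ E]

theorem laplacian_exteriorBarrier_le [Nontrivial E] (hΛ : 0 ≤ Λ) (hρ : 0 < ρ) (hz : 0 < ‖z - y‖)
    (hzD : ‖z - y‖ ≤ D) : Δ (exteriorBarrier Λ D ρ y) z ≤ -Λ := by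
  have hN : (0 : ℝ) < finrank ℝ E := Nat.cast_pos.2 finrank_pos
  have hD : 0 < D := hz.trans_le hzD
  rw [exteriorBarrier_eq, laplacian_const_add_mul _ _ (contDiffAt_inv_norm_sub_pow _ hz),
    laplacian_inv_norm_sub_pow_finrank hz, neg_mul, neg_le_neg_iff]
  calc Λ = Λ * D ^ (finrank ℝ E + 2) / (2 * finrank ℝ E * ρ ^ finrank ℝ E) * ρ ^ finrank ℝ E *
        (2 * finrank ℝ E * (D ^ (finrank ℝ E + 2))⁻¹) := by field_simp
    _ ≤ _ := by gcongr

theorem exteriorBarrier_le [Nontrivial E] (hΛ : 0 ≤ Λ) (hD : 0 ≤ D) (hρ : 0 < ρ)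
    (hz : ρ ≤ ‖z - y‖) :
    exteriorBarrier Λ D ρ y z ≤
      Λ * D ^ (finrank ℝ E + 2) / (2 * ρ ^ (finrank ℝ E + 1)) * (‖z - y‖ - ρ) := by
  have hN : (0 : ℝ) < finrank ℝ E := Nat.cast_pos.2 finrank_pos
  have hz₀ : 0 < ‖z - y‖ := hρ.trans_le hz
  have hbernoulli : 1 - (ρ / ‖z - y‖) ^ finrank ℝ E ≤ finrank ℝ E * ((‖z - y‖ - ρ) / ρ) := by
    have hpow := one_add_mul_le_pow (a := ρ / ‖z - y‖ - 1)
      (by linarith [div_pos hρ hz₀]) (finrank ℝ E)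
    have hlin : 1 - ρ / ‖z - y‖ ≤ (‖z - y‖ - ρ) / ρ := by
      rw [one_sub_div hz₀.ne']
      have := sub_nonneg.2 hz
      gcongr
    rw [add_sub_cancel] at hpow
    linarith [mul_le_mul_of_nonneg_left hlin hN.le]
  calc exteriorBarrier Λ D ρ y z ≤
        Λ * D ^ (finrank ℝ E + 2) / (2 * finrank ℝ E * ρ ^ finrank ℝ E) *
          (finrank ℝ E * ((‖z - y‖ - ρ) / ρ)) := by
        rw [exteriorBarrier]
        gcongr
    _ = _ := by
        rw [pow_succ ρ]
        field_simp

end ExteriorBarrier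

variable [FiniteDimensional ℝ E]

/-- `φ` is a subsolution of the torsion problem `-Δφ = Λ` in `Ω`, `φ = 0` on `∂Ω`. The differential
inequality is only required where `φ` is positive, so that `φ` may vanish on obstacles inside
`Ω`. -/
structure IsTorsionSubsol (Ω : Set E) (Λ : ℝ) (φ : E → ℝ) : Prop where
  continuousOn : ContinuousOn φ (closure Ω)
  mem_of_pos : ∀ ⦃x⦄, 0 < φ x → x ∈ Ω
  contDiffAt : ∀ ⦃x⦄, 0 < φ x → ContDiffAt ℝ 2 φ x
  neg_le_laplacian : ∀ ⦃x⦄, 0 < φ x → -Λ ≤ Δ φ x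

namespace IsTorsionSubsol

variable [Nontrivial E] {Ω : Set E} {Λ : ℝ} {φ : E → ℝ}

theorem le_of_laplacian_le (h : IsTorsionSubsol Ω Λ φ) (hΩ : IsOpen Ω)
    (hb : Bornology.IsBounded Ω) {ψ : E → ℝ} (hψ : ContinuousOn ψ (closure Ω))
    (hψ₀ : ∀ z ∈ closure Ω, 0 ≤ ψ z) (hψ₂ : ∀ z ∈ Ω, ContDiffAt ℝ 2 ψ z)
    (hΔ : ∀ z ∈ Ω, Δ ψ z ≤ -Λ) {x : E} (hx : x ∈ closure Ω) : φ x ≤ ψ x := by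
  refine le_of_laplacian_le_laplacian hb.isCompact_closure h.continuousOn hψ
    (fun z hz hlt ↦ ?_) hx
  have hpos : 0 < φ z := (hψ₀ z hz).trans_lt hlt
  have hzΩ := h.mem_of_pos hpos
  exact ⟨mem_of_superset (hΩ.mem_nhds hzΩ) subset_closure, h.contDiffAt hpos, hψ₂ z hzΩ,
    (hΔ z hzΩ).trans (h.neg_le_laplacian hpos)⟩

theorem le_diam_sq (h : IsTorsionSubsol Ω Λ φ) (hΩ : IsOpen Ω) (hb : Bornology.IsBounded Ω)
    (hΛ : 0 ≤ Λ) (x : E) : φ x ≤ Λ * diam Ω ^ 2 / (2 * finrank ℝ E) := by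
  have hN : (0 : ℝ) < finrank ℝ E := Nat.cast_pos.2 finrank_pos
  rcases le_or_gt (φ x) 0 with hle | hpos
  · exact hle.trans (by positivity)
  have hx := subset_closure (h.mem_of_pos hpos)
  set b : ℝ := Λ / (2 * finrank ℝ E)
  let ψ : E → ℝ := fun z ↦ b * diam Ω ^ 2 + -b * ‖z - x‖ ^ 2
  have hψ : ContDiff ℝ 2 ψ := contDiff_const.add (contDiff_const.mul (contDiff_norm_sub_sq x))
  have hψ₀ : ∀ z ∈ closure Ω, 0 ≤ ψ z := fun z hz ↦ by
    have hzx : ‖z - x‖ ^ 2 ≤ diam Ω ^ 2 := by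
      rw [← diam_closure, ← dist_eq_norm]
      gcongr
      exact dist_le_diam_of_mem hb.closure hz hx
    have : 0 ≤ b * (diam Ω ^ 2 - ‖z - x‖ ^ 2) := mul_nonneg (by positivity) (sub_nonneg.2 hzx)
    simp only [ψ]
    linarith
  have hΔ (z : E) : Δ ψ z = -Λ := by
    rw [laplacian_const_add_mul _ _ (contDiff_norm_sub_sq x).contDiffAt, laplacian_norm_sub_sq]
    simp only [b]
    field_simp
  have := h.le_of_laplacian_le hΩ hb hψ.continuous.continuousOn hψ₀
    (fun _ _ ↦ hψ.contDiffAt) (fun z _ ↦ (hΔ z).le) hx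
  refine this.trans_eq ?_
  simp only [ψ, b, sub_self, norm_zero]
  ring

theorem le_mul_dist_of_exterior_ball (h : IsTorsionSubsol Ω Λ φ) (hΩ : IsOpen Ω)
    (hb : Bornology.IsBounded Ω) (hΛ : 0 ≤ Λ) {y ξ : E} {ρ D : ℝ} (hρ : 0 < ρ)
    (hξ : dist ξ y = ρ) (hy : ∀ z ∈ Ω, ρ ≤ dist z y) (hD : ∀ z ∈ Ω, dist z y ≤ D) {x : E}
    (hx : x ∈ Ω) :
    φ x ≤ Λ * D ^ (finrank ℝ E + 2) / (2 * ρ ^ (finrank ℝ E + 1)) * dist x ξ := by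
  have hD₀ : 0 ≤ D := hρ.le.trans ((hy x hx).trans (hD x hx))
  have hcl : ∀ z ∈ closure Ω, ρ ≤ ‖z - y‖ := by
    have hclosed : IsClosed {z | ρ ≤ dist z y} := isClosed_le (by fun_prop) (by fun_prop)
    simp only [← dist_eq_norm]
    exact fun z hz ↦ closure_minimal hy hclosed hz
  have hpos : ∀ z ∈ closure Ω, 0 < ‖z - y‖ := fun z hz ↦ hρ.trans_le (hcl z hz)
  have htri : ‖x - y‖ - ρ ≤ dist x ξ := by
    rw [← dist_eq_norm, ← hξ, sub_le_iff_le_add]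
    exact dist_triangle x ξ y
  calc φ x ≤ exteriorBarrier Λ D ρ y x := h.le_of_laplacian_le hΩ hb
        (fun z hz ↦ (contDiffAt_exteriorBarrier (hpos z hz)).continuousAt.continuousWithinAt)
        (fun z hz ↦ exteriorBarrier_nonneg hΛ hD₀ hρ (hcl z hz))
        (fun z hz ↦ contDiffAt_exteriorBarrier (hpos z (subset_closure hz)))
        (fun z hz ↦ laplacian_exteriorBarrier_le hΛ hρ (hpos z (subset_closure hz))
          (dist_eq_norm z y ▸ hD z hz)) (subset_closure hx)
    _ ≤ Λ * D ^ (finrank ℝ E + 2) / (2 * ρ ^ (finrank ℝ E + 1)) * (‖x - y‖ - ρ) :=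
        exteriorBarrier_le hΛ hD₀ hρ (hcl x (subset_closure hx))
    _ ≤ _ := by gcongr

theorem le_mul_dist_of_mem_frontier (h : IsTorsionSubsol Ω Λ φ) (hΩ : IsOpen Ω)
    (hb : Bornology.IsBounded Ω) (hΛ : 0 ≤ Λ) {ρ : ℝ} (hρ : 0 < ρ) (hext : UniformExteriorBall Ω ρ)
    {x ξ : E} (hx : x ∈ Ω) (hξ : ξ ∈ frontier Ω) :
    φ x ≤ Λ * (diam Ω + ρ) ^ (finrank ℝ E + 2) / (2 * ρ ^ (finrank ℝ E + 1)) * dist x ξ := by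
  obtain ⟨y, hξy, hy⟩ := hext ξ hξ
  refine h.le_mul_dist_of_exterior_ball hΩ hb hΛ hρ hξy hy (fun z hz ↦ ?_) hx
  calc dist z y ≤ dist z ξ + dist ξ y := dist_triangle z ξ y
    _ ≤ diam Ω + ρ := by
      rw [hξy, ← diam_closure Ω]
      gcongr
      exact dist_le_diam_of_mem hb.closure (subset_closure hz) (frontier_subset_closure hξ)

theorem le_mul_dist_of_notMem (h : IsTorsionSubsol Ω Λ φ) (hΩ : IsOpen Ω)
    (hb : Bornology.IsBounded Ω) (hΛ : 0 ≤ Λ) {ρ : ℝ} (hρ : 0 < ρ) (hext : UniformExteriorBall Ω ρ)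
    {x y : E} (hy : y ∉ Ω) :
    φ x ≤ Λ * (diam Ω + ρ) ^ (finrank ℝ E + 2) / (2 * ρ ^ (finrank ℝ E + 1)) * dist x y := by
  by_cases hx : x ∈ Ω
  · obtain ⟨ξ, hξ, hdist⟩ :=
      exists_mem_frontier_infDist_compl_eq_dist hx ((ne_univ_iff_exists_notMem Ω).2 ⟨y, hy⟩)
    refine (h.le_mul_dist_of_mem_frontier hΩ hb hΛ hρ hext hx hξ).trans ?_
    rw [← hdist]
    gcongr
    exact infDist_le_dist_of_mem hy
  · exact (not_lt.1 fun hpos ↦ hx (h.mem_of_pos hpos)).trans (by positivity)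

end IsTorsionSubsol

end TorsionSubsolution

section Reflection

open Laplacian Module RealInnerProductSpace

variable {E : Type*} [NormedAddCommGroup E] [InnerProductSpace ℝ E]

/-- The comparison function on the half ball `{‖z - c‖ ≤ r, 0 ≤ ⟪e, z - c⟫}`: it has Laplacian
`-Λ`, it is nonnegative, and it is at least `M` on the spherical part of the boundary. -/
def halfBallBarrier (M Λ r : ℝ) (c e z : E) : ℝ :=
  M / r ^ 2 * ‖z - c‖ ^ 2 +
    (finrank ℝ E * (M / r ^ 2) + Λ / 2) * (r * ⟪e, z - c⟫ - ⟪e, z - c⟫ ^ 2)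

section HalfBallBarrier

variable {M Λ r : ℝ} {c e z : E}

theorem contDiff_halfBallBarrier : ContDiff ℝ 2 (halfBallBarrier M Λ r c e) :=
  (contDiff_const.mul (contDiff_norm_sub_sq c)).add <| contDiff_const.mul <|
    (contDiff_const.mul (contDiff_inner_sub c e)).sub ((contDiff_inner_sub c e).pow 2)

theorem le_halfBallBarrier (hM : 0 ≤ M) (hΛ : 0 ≤ Λ) (he : ‖e‖ = 1) (hz : ‖z - c‖ ≤ r)
    (hez : 0 ≤ ⟪e, z - c⟫) : M / r ^ 2 * ‖z - c‖ ^ 2 ≤ halfBallBarrier M Λ r c e z := by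
  have hinner : ⟪e, z - c⟫ ≤ r := (real_inner_le_norm _ _).trans (by rwa [he, one_mul])
  refine le_add_of_nonneg_right (mul_nonneg (by positivity) ?_)
  rw [sq, ← sub_mul]
  exact mul_nonneg (sub_nonneg.2 hinner) hez

theorem laplacian_halfBallBarrier [FiniteDimensional ℝ E] (he : ‖e‖ = 1) :
    Δ (halfBallBarrier M Λ r c e) z = -Λ := by
  set α := M / r ^ 2
  set γ := finrank ℝ E * α + Λ / 2
  let s : E → ℝ := fun z ↦ ‖z - c‖ ^ 2
  let t : E → ℝ := fun z ↦ ⟪e, z - c⟫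
  let t₂ : E → ℝ := fun z ↦ ⟪e, z - c⟫ ^ 2
  have hs : ContDiffAt ℝ 2 s z := (contDiff_norm_sub_sq c).contDiffAt
  have ht : ContDiffAt ℝ 2 t z := (contDiff_inner_sub c e).contDiffAt
  have ht₂ : ContDiffAt ℝ 2 t₂ z := ((contDiff_inner_sub c e).pow 2).contDiffAt
  have hrt : ContDiffAt ℝ 2 (r • t) z := contDiffAt_const.smul ht
  have hαs : ContDiffAt ℝ 2 (α • s) z := contDiffAt_const.smul hs
  have hrt₂ : ContDiffAt ℝ 2 (r • t - t₂) z := hrt.sub ht₂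
  have hγ : ContDiffAt ℝ 2 (γ • (r • t - t₂)) z := contDiffAt_const.smul hrt₂
  have hbarrier : halfBallBarrier M Λ r c e = α • s + γ • (r • t - t₂) := rfl
  rw [hbarrier, hαs.laplacian_add hγ, InnerProductSpace.laplacian_smul _ hs,
    InnerProductSpace.laplacian_smul _ hrt₂, hrt.laplacian_sub ht₂,
    InnerProductSpace.laplacian_smul _ ht, laplacian_norm_sub_sq, laplacian_inner_sub,
    laplacian_inner_sub_sq, he]
  simp only [smul_eq_mul, γ]
  ring

end HalfBallBarrier

variable [FiniteDimensional ℝ E]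

theorem reflection_perpBisector_right (x y : E) [Nonempty (AffineSubspace.perpBisector x y)] :
    EuclideanGeometry.reflection (AffineSubspace.perpBisector x y) y = x := by
  have hv : y - midpoint ℝ x y ∈ (AffineSubspace.perpBisector x y).directionᗮ := by
    rw [AffineSubspace.direction_perpBisector, right_sub_midpoint]
    exact Submodule.le_orthogonal_orthogonal _
      (Submodule.smul_mem _ _ (Submodule.mem_span_singleton_self _))
  have := EuclideanGeometry.reflection_orthogonal_vadd
    (AffineSubspace.midpoint_mem_perpBisector x y) hv
  rwa [vadd_eq_add, sub_add_cancel, right_sub_midpoint, ← smul_neg, neg_sub,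
    ← left_sub_midpoint, vadd_eq_add, sub_add_cancel] at this

theorem exists_affineIsometryEquiv_swap {x y : E} (hne : x ≠ y) :
    ∃ (e : E) (R : E ≃ᵃⁱ[ℝ] E), ‖e‖ = 1 ∧ x - midpoint ℝ x y = (dist x y / 2) • e ∧ R x = y ∧
      ∀ z, ⟪e, z - midpoint ℝ x y⟫ = 0 → R z = z := by
  have hd : 0 < dist x y := dist_pos.2 hne
  have : Nonempty (AffineSubspace.perpBisector y x) :=
    AffineSubspace.perpBisector_nonempty.to_subtype
  refine ⟨(dist x y)⁻¹ • (x - y),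
    EuclideanGeometry.reflection (AffineSubspace.perpBisector y x), ?_, ?_,
    reflection_perpBisector_right y x, fun z hz ↦ ?_⟩
  · rw [norm_smul, Real.norm_of_nonneg (by positivity), ← dist_eq_norm, inv_mul_cancel₀ hd.ne']
  · rw [left_sub_midpoint, invOf_eq_inv, smul_smul]
    congr 1
    field_simp
  · rw [inner_smul_left, midpoint_comm] at hz
    exact (EuclideanGeometry.reflection_eq_self_iff z).2
      (AffineSubspace.mem_perpBisector_iff_inner_eq_zero'.2
        ((mul_eq_zero.1 hz).resolve_left (inv_pos.2 hd).ne'))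

namespace IsTorsionSubsol

variable [Nontrivial E] {Ω : Set E} {Λ M r : ℝ} {φ W : E → ℝ}

theorem le_comp_affineIsometryEquiv_add (h : IsTorsionSubsol Ω Λ φ) (hφ₀ : ∀ z, 0 ≤ φ z)
    (hφM : ∀ z, φ z ≤ M) (hφΔ : ∀ z, 0 < φ z → Δ φ z ≤ 0) (hΛ : 0 ≤ Λ) (hr : 0 < r) {c e : E}
    (hB : closedBall c r ⊆ Ω) (hW : ContDiff ℝ 2 W) (hW₀ : ∀ z, 0 ≤ W z) (hWΔ : ∀ z, Δ W z ≤ 0)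
    (hWφ : ∀ z ∈ closedBall c r, φ z = 0 → 1 ≤ W z) (he : ‖e‖ = 1) {R : E ≃ᵃⁱ[ℝ] E}
    (hR : ∀ z, ⟪e, z - c⟫ = 0 → R z = z) {x : E} (hx : x ∈ closedBall c r)
    (hex : 0 ≤ ⟪e, x - c⟫) :
    φ x ≤ φ (R x) + M * W (R x) + halfBallBarrier M Λ r c e x := by
  have hM : 0 ≤ M := (hφ₀ x).trans (hφM x)
  set Q := halfBallBarrier M Λ r c e
  set K : Set E := closedBall c r ∩ {z | 0 ≤ ⟪e, z - c⟫}
  have hRB : MapsTo R (closedBall c r) (closedBall c r) := fun z hz ↦ by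
    have hRc : R c = c := hR c (by simp)
    rwa [mem_closedBall, ← hRc, R.dist_map]
  have hQK : ∀ z ∈ K, M / r ^ 2 * ‖z - c‖ ^ 2 ≤ Q z := fun z hz ↦
    le_halfBallBarrier hM hΛ he (mem_closedBall_iff_norm.1 hz.1) hz.2
  have hφB : ContinuousOn φ (closedBall c r) := h.continuousOn.mono (hB.trans subset_closure)
  have hK : IsCompact K := (isCompact_closedBall c r).inter_right
    (isClosed_le continuous_const (contDiff_inner_sub c e).continuous)
  refine le_of_laplacian_le_laplacian (w := (φ + M • W) ∘ R + Q) hK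
    (hφB.mono inter_subset_left) ?_ (fun z hz hlt ↦ ?_) ⟨hx, hex⟩
  · exact ((hφB.add (hW.continuous.const_smul M).continuousOn).comp R.continuous.continuousOn
      (hRB.mono_left inter_subset_left)).add contDiff_halfBallBarrier.continuous.continuousOn
  replace hlt : φ (R z) + M * W (R z) + Q z < φ z := hlt
  have hQz := hQK z hz
  have hQz₀ : 0 ≤ Q z := hQz.trans' (by positivity)
  have hMW : 0 ≤ M * W (R z) := mul_nonneg hM (hW₀ _)
  have hφz : 0 < φ z := by linarith [hφ₀ (R z)]
  have hφRz : 0 < φ (R z) := (hφ₀ _).lt_of_ne' fun hzero ↦ by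
    linarith [le_mul_of_one_le_right hM (hWφ _ (hRB hz.1) hzero), hφM z]
  have hzr : dist z c < r := hz.1.lt_of_ne fun hsphere ↦ by
    rw [← dist_eq_norm, hsphere, div_mul_cancel₀ _ (by positivity)] at hQz
    linarith [hφM z]
  have hez : 0 < ⟪e, z - c⟫ := hz.2.lt_of_ne' fun hplane ↦ by
    rw [hR z hplane] at hlt hMW
    linarith
  have hKz : K ∈ 𝓝 z := inter_mem (closedBall_mem_nhds_of_mem hzr) <|
    ((contDiff_inner_sub c e).continuous.continuousAt.eventually_const_lt hez).mono
      fun _ ↦ le_of_lt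
  have hMW₂ : ContDiffAt ℝ 2 (M • W) (R z) := contDiffAt_const.smul hW.contDiffAt
  have hφW : ContDiffAt ℝ 2 (φ + M • W) (R z) := (h.contDiffAt hφRz).add hMW₂
  have hφWR : ContDiffAt ℝ 2 ((φ + M • W) ∘ R) z :=
    hφW.comp z R.toAffineIsometry.toContinuousAffineMap.contDiff.contDiffAt
  have hQ : ContDiffAt ℝ 2 Q z := contDiff_halfBallBarrier.contDiffAt
  refine ⟨hKz, h.contDiffAt hφz, hφWR.add hQ, ?_⟩
  rw [hφWR.laplacian_add hQ, laplacian_halfBallBarrier he,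
    laplacian_comp_affineIsometryEquiv R hφW, (h.contDiffAt hφRz).laplacian_add hMW₂,
    InnerProductSpace.laplacian_smul _ hW.contDiffAt, smul_eq_mul]
  linarith [hφΔ _ hφRz, mul_nonpos_of_nonneg_of_nonpos hM (hWΔ (R z)), h.neg_le_laplacian hφz]

theorem sub_le_of_superharmonic (h : IsTorsionSubsol Ω Λ φ) (hφ₀ : ∀ z, 0 ≤ φ z)
    (hφM : ∀ z, φ z ≤ M) (hφΔ : ∀ z, 0 < φ z → Δ φ z ≤ 0) (hΛ : 0 ≤ Λ) (hr : 0 < r) {x y : E}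
    (hxy : dist x y ≤ 2 * r) (hB : closedBall (midpoint ℝ x y) r ⊆ Ω) (hW : ContDiff ℝ 2 W)
    (hW₀ : ∀ z, 0 ≤ W z) (hWΔ : ∀ z, Δ W z ≤ 0)
    (hWφ : ∀ z ∈ closedBall (midpoint ℝ x y) r, φ z = 0 → 1 ≤ W z) :
    φ x - φ y ≤ M * W y + M / r ^ 2 * (dist x y / 2) ^ 2 +
      (finrank ℝ E * (M / r ^ 2) + Λ / 2) * (r * (dist x y / 2)) := by
  have hM : 0 ≤ M := (hφ₀ x).trans (hφM x)
  rcases eq_or_ne x y with rfl | hne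
  · rw [sub_self, dist_self]
    have := mul_nonneg hM (hW₀ x)
    positivity
  obtain ⟨e, R, he, hxc, hRx, hR⟩ := exists_affineIsometryEquiv_swap hne
  set c := midpoint ℝ x y
  set d := dist x y
  have : 0 ≤ d := dist_nonneg
  have hxcd : ‖x - c‖ = d / 2 := by
    rw [hxc, norm_smul, he, mul_one, Real.norm_of_nonneg (by positivity)]
  have hex : ⟪e, x - c⟫ = d / 2 := by
    rw [hxc, inner_smul_right, real_inner_self_eq_norm_sq, he, one_pow, mul_one]
  have hx : x ∈ closedBall c r := mem_closedBall_iff_norm.2 (by rw [hxcd]; linarith)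
  have hcomp := h.le_comp_affineIsometryEquiv_add hφ₀ hφM hφΔ hΛ hr hB hW hW₀ hWΔ hWφ he hR hx
    (by rw [hex]; positivity)
  rw [hRx, halfBallBarrier, hxcd, hex] at hcomp
  have : 0 ≤ (finrank ℝ E * (M / r ^ 2) + Λ / 2) * (d / 2) ^ 2 := by positivity
  linarith

end IsTorsionSubsol

end Reflection

section Bubble

open Laplacian Module

variable {E : Type*} [NormedAddCommGroup E] [InnerProductSpace ℝ E]

/-- The Aubin–Talenti bubble of scale `a` centred at `y`, a smooth positive superharmonic function,
normalised to take the value `1` on the sphere `‖z - y‖ = a`. -/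
def bubble (a : ℝ) (y z : E) : ℝ :=
  (2 * a ^ 2 / (‖z - y‖ ^ 2 + a ^ 2)) ^ ((finrank ℝ E - 2) / 2 : ℝ)

variable {a : ℝ} {y z : E}

theorem bubble_nonneg : 0 ≤ bubble a y z := by
  unfold bubble
  positivity

theorem bubble_eq (a : ℝ) (y : E) :
    bubble a y = fun z ↦ 0 + (2 * a ^ 2) ^ ((finrank ℝ E - 2) / 2 : ℝ) *
      (‖z - y‖ ^ 2 + a ^ 2) ^ (-((finrank ℝ E - 2) / 2) : ℝ) := by
  ext z
  rw [bubble, Real.div_rpow (by positivity) (by positivity), Real.rpow_neg (by positivity),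
    div_eq_mul_inv, zero_add]

theorem contDiff_bubble (ha : 0 < a) : ContDiff ℝ 2 (bubble a y) := by
  rw [bubble_eq, contDiff_iff_contDiffAt]
  exact fun z ↦ contDiffAt_const.add
    (contDiffAt_const.mul (contDiffAt_norm_sub_sq_add_rpow _ _ (by positivity)))

theorem laplacian_bubble_nonpos [FiniteDimensional ℝ E] (hE : 2 ≤ finrank ℝ E) (ha : 0 < a) :
    Δ (bubble a y) z ≤ 0 := by
  have hq : 0 ≤ ((finrank ℝ E : ℝ) - 2) / 2 := by
    have : (2 : ℝ) ≤ finrank ℝ E := mod_cast hE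
    linarith
  have hpos : 0 < ‖z - y‖ ^ 2 + a ^ 2 := by positivity
  rw [bubble_eq, laplacian_const_add_mul _ _ (contDiffAt_norm_sub_sq_add_rpow _ _ hpos),
    laplacian_norm_sub_sq_add_rpow _ _ _ _ hpos]
  set q := ((finrank ℝ E : ℝ) - 2) / 2 with hq_def
  have hfactor : 2 * (-q - 1) * ‖z - y‖ ^ 2 + finrank ℝ E * (‖z - y‖ ^ 2 + a ^ 2) =
      finrank ℝ E * a ^ 2 := by
    rw [hq_def]
    ring
  rw [hfactor]
  have : 0 ≤ (2 * a ^ 2) ^ q * (2 * q * (‖z - y‖ ^ 2 + a ^ 2) ^ (-q - 2) *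
    (finrank ℝ E * a ^ 2)) := by positivity
  linarith

theorem one_le_bubble (hE : 2 ≤ finrank ℝ E) (ha : 0 < a) (hz : dist z y ≤ a) :
    1 ≤ bubble a y z := by
  have hE' : (2 : ℝ) ≤ finrank ℝ E := mod_cast hE
  refine Real.one_le_rpow ((one_le_div (by positivity)).2 ?_) (by linarith)
  rw [two_mul, ← dist_eq_norm]
  gcongr

theorem bubble_le (hE : 2 ≤ finrank ℝ E) {s : ℝ} (hs : 0 < s) (hz : s ≤ ‖z - y‖ ^ 2) :
    bubble a y z ≤ (2 * a ^ 2 / s) ^ ((finrank ℝ E - 2) / 2 : ℝ) := by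
  have hE' : (2 : ℝ) ≤ finrank ℝ E := mod_cast hE
  have hs' : s ≤ ‖z - y‖ ^ 2 + a ^ 2 := hz.trans (le_add_of_nonneg_right (sq_nonneg a))
  unfold bubble
  have : 0 ≤ ((finrank ℝ E - 2) / 2 : ℝ) := by linarith
  gcongr

theorem laplacian_sum {ι : Type*} [FiniteDimensional ℝ E] (s : Finset ι) {f : ι → E → ℝ}
    (hf : ∀ i ∈ s, ContDiffAt ℝ 2 (f i) z) : Δ (∑ i ∈ s, f i) z = ∑ i ∈ s, Δ (f i) z := by
  classical
  induction s using Finset.induction_on with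
  | empty => exact congrFun (InnerProductSpace.laplacian_const (c := (0 : ℝ))) z
  | insert i s hi ih =>
    have hfs : ∀ j ∈ s, ContDiffAt ℝ 2 (f j) z := fun j hj ↦ hf j (Finset.mem_insert_of_mem hj)
    have hsum : ContDiffAt ℝ 2 (∑ j ∈ s, f j) z := by
      simpa only [← Finset.sum_apply] using ContDiffAt.sum hfs
    rw [Finset.sum_insert hi, Finset.sum_insert hi,
      (hf i (Finset.mem_insert_self i s)).laplacian_add hsum, ih hfs]

end Bubble

section Lattice

variable {n : ℕ} {ε : ℝ}

/-- The point of the lattice `εℤⁿ` with integer coordinates `k`. -/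
def latticePoint (ε : ℝ) (k : Fin n → ℤ) : Eucl n := WithLp.toLp 2 fun i ↦ ε * k i

theorem latticePoint_zero : latticePoint ε (0 : Fin n → ℤ) = 0 := by
  ext i
  simp [latticePoint]

theorem exists_eq_add_latticePoint {m m' : Eucl n} (hm : m ∈ latticePts n ε)
    (hm' : m' ∈ latticePts n ε) : ∃ k, m' = m + latticePoint ε k := by
  choose j hj using hm
  choose j' hj' using hm'
  refine ⟨j' - j, ?_⟩
  ext i
  simp only [latticePoint, PiLp.add_apply, hj, hj', Pi.sub_apply]
  push_cast
  ring

theorem mul_abs_le_norm_latticePoint (hε : 0 ≤ ε) (k : Fin n → ℤ) (i : Fin n) :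
    ε * |(k i : ℝ)| ≤ ‖latticePoint ε k‖ := by
  simpa [latticePoint, abs_of_nonneg hε] using PiLp.norm_apply_le (latticePoint ε k) i

theorem le_norm_latticePoint (hε : 0 ≤ ε) {k : Fin n → ℤ} (hk : k ≠ 0) :
    ε ≤ ‖latticePoint ε k‖ := by
  obtain ⟨i, hi⟩ := Function.ne_iff.1 hk
  have : (1 : ℝ) ≤ |(k i : ℝ)| := mod_cast Int.one_le_abs hi
  exact (le_mul_of_one_le_right hε this).trans (mul_abs_le_norm_latticePoint hε k i)

theorem mem_Icc_of_norm_latticePoint_le (hε : 0 < ε) {k : Fin n → ℤ} {N : ℕ}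
    (hk : ‖latticePoint ε k‖ ≤ N * ε) : k ∈ Finset.Icc (-N : Fin n → ℤ) N := by
  have habs (i : Fin n) : |k i| ≤ N := by
    have := (mul_abs_le_norm_latticePoint hε.le k i).trans hk
    rw [mul_comm] at this
    exact_mod_cast le_of_mul_le_mul_right this hε
  exact Finset.mem_Icc.2 ⟨fun i ↦ (abs_le.1 (habs i)).1, fun i ↦ (abs_le.1 (habs i)).2⟩

theorem card_Icc_neg_natCast (n N : ℕ) :
    (Finset.Icc (-N : Fin n → ℤ) N).card = (2 * N + 1) ^ n := by
  have (i : Fin n) : (Finset.Icc ((-N : Fin n → ℤ) i) ((N : Fin n → ℤ) i)).card = 2 * N + 1 := by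
    simp only [Pi.neg_apply, Pi.natCast_apply, Int.card_Icc]
    omega
  rw [Pi.card_Icc, Finset.prod_congr rfl fun i _ ↦ this i]
  simp

end Lattice

section BubbleSum

open Laplacian

variable {n N : ℕ} {ε a : ℝ} {m z : Eucl n}

/-- The sum of the bubbles of scale `a` centred at the points of `εℤⁿ` in the cube of side `2Nε`
around `m`. -/
def bubbleSum (ε a : ℝ) (m : Eucl n) (N : ℕ) : Eucl n → ℝ :=
  ∑ k ∈ Finset.Icc (-N : Fin n → ℤ) N, bubble a (m + latticePoint ε k)

theorem bubbleSum_nonneg : 0 ≤ bubbleSum ε a m N z := by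
  rw [bubbleSum, Finset.sum_apply]
  exact Finset.sum_nonneg fun _ _ ↦ bubble_nonneg

theorem contDiff_bubbleSum (ha : 0 < a) : ContDiff ℝ 2 (bubbleSum ε a m N) := by
  have := ContDiff.sum (s := Finset.Icc (-N : Fin n → ℤ) N)
    fun k _ ↦ contDiff_bubble (y := m + latticePoint ε k) ha
  simpa only [bubbleSum, ← Finset.sum_apply] using this

theorem laplacian_bubbleSum_nonpos (hn : 2 ≤ n) (ha : 0 < a) : Δ (bubbleSum ε a m N) z ≤ 0 := by
  rw [bubbleSum, laplacian_sum _ fun _ _ ↦ (contDiff_bubble ha).contDiffAt]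
  exact Finset.sum_nonpos fun _ _ ↦ laplacian_bubble_nonpos (by simpa using hn) ha

theorem one_le_bubbleSum (hn : 2 ≤ n) (hε : 0 < ε) (ha : 0 < a) (hm : m ∈ latticePts n ε)
    (hz : z ∈ holes n ε a) (hzm : dist z m + a ≤ N * ε) : 1 ≤ bubbleSum ε a m N z := by
  obtain ⟨m', hm', hzm'⟩ := mem_iUnion₂.1 hz
  obtain ⟨k, rfl⟩ := exists_eq_add_latticePoint hm hm'
  have hk : k ∈ Finset.Icc (-N : Fin n → ℤ) N := by
    refine mem_Icc_of_norm_latticePoint_le hε ?_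
    rw [← dist_self_add_right (latticePoint ε k) m]
    have := dist_triangle_left m (m + latticePoint ε k) z
    linarith [mem_closedBall.1 hzm']
  rw [bubbleSum, Finset.sum_apply]
  exact (one_le_bubble (by simpa using hn) ha hzm').trans
    (Finset.single_le_sum (f := fun k ↦ bubble a (m + latticePoint ε k) z)
      (fun _ _ ↦ bubble_nonneg) hk)

theorem aStar_pos (hε : 0 < ε) : 0 < aStar n ε := Real.rpow_pos_of_pos hε _

theorem aStar_le (hn : 3 ≤ n) (hε : 0 < ε) (hε₁ : ε ≤ 1) : aStar n ε ≤ ε := by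
  have hn' : (3 : ℝ) ≤ n := mod_cast hn
  refine (Real.rpow_le_rpow_of_exponent_ge hε hε₁ ?_).trans_eq (Real.rpow_one ε)
  rw [one_le_div (by linarith)]
  linarith

theorem aStar_div_rpow (hn : 3 ≤ n) (hε : 0 < ε) :
    (aStar n ε / ε) ^ ((n - 2) / 2 : ℝ) = ε := by
  have hn' : (n : ℝ) - 2 ≠ 0 := by
    have : (3 : ℝ) ≤ n := mod_cast hn
    linarith
  rw [aStar, ← Real.rpow_sub_one hε.ne', ← Real.rpow_mul hε.le]
  convert Real.rpow_one ε using 2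
  field_simp
  ring

theorem bubble_aStar_center_le (hn : 3 ≤ n) (hε : 0 < ε) {y : Eucl n}
    (hz : √(ε * aStar n ε / 2) ≤ dist z y) :
    bubble (aStar n ε) y z ≤ 4 ^ ((n - 2) / 2 : ℝ) * ε := by
  have ha := aStar_pos (n := n) hε
  have hsq : ε * aStar n ε / 2 ≤ ‖z - y‖ ^ 2 := by
    rwa [← dist_eq_norm, ← Real.sqrt_le_left dist_nonneg]
  have hratio : 2 * aStar n ε ^ 2 / (ε * aStar n ε / 2) = 4 * (aStar n ε / ε) := by
    field_simp
    ring
  refine (bubble_le (by simpa using hn.trans' (by norm_num)) (by positivity) hsq).trans_eq ?_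
  rw [hratio, finrank_euclideanSpace_fin, Real.mul_rpow (by norm_num) (by positivity),
    aStar_div_rpow hn hε]

theorem bubble_aStar_le (hn : 3 ≤ n) (hε : 0 < ε) {y : Eucl n} (hz : ε / 2 ≤ dist z y) :
    bubble (aStar n ε) y z ≤ 8 ^ ((n - 2) / 2 : ℝ) * ε ^ 2 := by
  have ha := aStar_pos (n := n) hε
  have hsq : (ε / 2) ^ 2 ≤ ‖z - y‖ ^ 2 := by
    rw [← dist_eq_norm]
    gcongr
  have hratio : 2 * aStar n ε ^ 2 / (ε / 2) ^ 2 = 8 * (aStar n ε / ε * (aStar n ε / ε)) := by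
    field_simp
    ring
  refine (bubble_le (by simpa using hn.trans' (by norm_num)) (by positivity) hsq).trans_eq ?_
  rw [hratio, finrank_euclideanSpace_fin, Real.mul_rpow (by norm_num) (by positivity),
    Real.mul_rpow (by positivity) (by positivity), aStar_div_rpow hn hε, sq]

theorem bubbleSum_aStar_le (hn : 3 ≤ n) (hε : 0 < ε) (hz : dist z m ≤ ε / 2)
    (hz' : √(ε * aStar n ε / 2) ≤ dist z m) :
    bubbleSum ε (aStar n ε) m N z ≤
      4 ^ ((n - 2) / 2 : ℝ) * ε + (2 * N + 1) ^ n * (8 ^ ((n - 2) / 2 : ℝ) * ε ^ 2) := by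
  set b := 8 ^ ((n - 2) / 2 : ℝ) * ε ^ 2
  have hmem : 0 ∈ Finset.Icc (-N : Fin n → ℤ) N :=
    Finset.mem_Icc.2 ⟨fun _ ↦ by simp, fun _ ↦ by simp⟩
  have hrest : ∀ k ∈ (Finset.Icc (-N : Fin n → ℤ) N).erase 0,
      bubble (aStar n ε) (m + latticePoint ε k) z ≤ b := fun k hk ↦ by
    refine bubble_aStar_le hn hε ?_
    have hdist := dist_triangle_left m (m + latticePoint ε k) z
    rw [dist_self_add_right] at hdist
    linarith [le_norm_latticePoint hε.le (Finset.ne_of_mem_erase hk)]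
  have hcard : ((Finset.Icc (-N : Fin n → ℤ) N).erase 0).card * b ≤ (2 * N + 1) ^ n * b := by
    gcongr
    exact_mod_cast (Finset.card_erase_le).trans_eq (card_Icc_neg_natCast n N)
  rw [bubbleSum, Finset.sum_apply, ← Finset.add_sum_erase _ _ hmem, latticePoint_zero, add_zero]
  gcongr
  · exact bubble_aStar_center_le hn hε hz'
  · exact (Finset.sum_le_card_nsmul _ _ _ hrest).trans (by rwa [nsmul_eq_mul])

theorem bubbleSum_aStar_natCeil_le (hn : 3 ≤ n) {δ : ℝ} (hδ : 0 < δ) (hδ₁ : δ ≤ 1)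
    (hδε : δ ^ n = ε) (hz : dist z m ≤ ε / 2) (hz' : √(ε * aStar n ε / 2) ≤ dist z m) :
    bubbleSum ε (aStar n ε) m (⌈δ⁻¹⌉₊ + 2) z ≤
      (4 ^ ((n - 2) / 2 : ℝ) + 9 ^ n * 8 ^ ((n - 2) / 2 : ℝ)) * ε := by
  have hε : 0 < ε := hδε ▸ pow_pos hδ n
  set N := ⌈δ⁻¹⌉₊ + 2 with hN
  have hNδ : (2 * N + 1) * δ ≤ 9 := by
    have hceil : (N : ℝ) ≤ δ⁻¹ + 3 := by
      rw [hN]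
      push_cast
      linarith [Nat.ceil_lt_add_one (inv_nonneg.2 hδ.le)]
    calc (2 * N + 1) * δ ≤ (2 * (δ⁻¹ + 3) + 1) * δ := by gcongr
      _ = 2 + 7 * δ := by field_simp; ring
      _ ≤ 9 := by linarith
  have hcount : (2 * N + 1) ^ n * ε ≤ 9 ^ n := by
    rw [← hδε, ← mul_pow]
    gcongr
  calc bubbleSum ε (aStar n ε) m N z
      ≤ 4 ^ ((n - 2) / 2 : ℝ) * ε + (2 * N + 1) ^ n * (8 ^ ((n - 2) / 2 : ℝ) * ε ^ 2) :=
        bubbleSum_aStar_le hn hε hz hz'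
    _ = 4 ^ ((n - 2) / 2 : ℝ) * ε + (2 * N + 1) ^ n * ε * 8 ^ ((n - 2) / 2 : ℝ) * ε := by ring
    _ ≤ 4 ^ ((n - 2) / 2 : ℝ) * ε + 9 ^ n * 8 ^ ((n - 2) / 2 : ℝ) * ε := by gcongr
    _ = _ := by ring

end BubbleSum

section EigenvalueProblem

open Laplacian Module

theorem le_rpow_inv_of_le_rpow_mul {S c p : ℝ} (hS : 0 < S) (hp : p < 1) (h : S ≤ S ^ p * c) :
    S ≤ c ^ (1 - p)⁻¹ := by
  have hSc : S ^ (1 - p) ≤ c := by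
    rwa [Real.rpow_sub hS, Real.rpow_one, div_le_iff₀' (by positivity)]
  have hp' : 0 < 1 - p := sub_pos.2 hp
  rwa [Real.le_rpow_inv_iff_of_pos hS.le (hSc.trans' (by positivity)) hp']

namespace IsEVSol

variable {n : ℕ} {Ω : Set (Eucl n)} {ε a p M L : ℝ} {φ : Eucl n → ℝ} {x y m : Eucl n}

theorem nonneg (h : IsEVSol n Ω ε a p φ) (x : Eucl n) : 0 ≤ φ x := by
  by_cases hx : x ∈ Ω \ holes n ε a
  · exact (h.2.2.2.1 x hx).le
  · exact (h.2.2.2.2 x hx).ge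

theorem mem_of_pos (h : IsEVSol n Ω ε a p φ) (hx : 0 < φ x) : x ∈ Ω \ holes n ε a :=
  not_not.1 fun hmem ↦ hx.ne' (h.2.2.2.2 x hmem)

theorem mem_holes_of_eq_zero (h : IsEVSol n Ω ε a p φ) (hx : x ∈ Ω) (hφx : φ x = 0) :
    x ∈ holes n ε a :=
  not_not.1 fun hmem ↦ (h.2.2.2.1 x ⟨hx, hmem⟩).ne' hφx

theorem contDiffAt (h : IsEVSol n Ω ε a p φ) (hΩ : IsOpen Ω) (hx : 0 < φ x) :
    ContDiffAt ℝ 2 φ x := by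
  have hcont : ContinuousAt φ x :=
    (h.1.mono subset_closure).continuousAt (hΩ.mem_nhds (h.mem_of_pos hx).1)
  exact h.2.1.contDiffAt ((hcont.eventually_const_lt hx).mono fun _ ↦ h.mem_of_pos)

theorem laplacian_eq (h : IsEVSol n Ω ε a p φ) (hΩ : IsOpen Ω) (hx : 0 < φ x) :
    Δ φ x = -φ x ^ p := by
  rw [← lap_eq_laplacian (h.contDiffAt hΩ hx)]
  exact eq_neg_of_add_eq_zero_left (h.2.2.1 x (h.mem_of_pos hx))

theorem isTorsionSubsol (h : IsEVSol n Ω ε a p φ) (hΩ : IsOpen Ω) (hp : 0 ≤ p)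
    (hM : ∀ x, φ x ≤ M) : IsTorsionSubsol Ω (M ^ p) φ where
  continuousOn := h.1
  mem_of_pos _ hx := (h.mem_of_pos hx).1
  contDiffAt _ hx := h.contDiffAt hΩ hx
  neg_le_laplacian x hx := by
    rw [h.laplacian_eq hΩ hx]
    exact neg_le_neg (Real.rpow_le_rpow hx.le (hM x) hp)

theorem le_rpow_inv [NeZero n] (h : IsEVSol n Ω ε a p φ) (hΩ : IsOpen Ω)
    (hb : Bornology.IsBounded Ω) (hp₀ : 0 ≤ p) (hp₁ : p < 1) (x : Eucl n) :
    φ x ≤ (diam Ω ^ 2 / (2 * n)) ^ (1 - p)⁻¹ := by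
  rcases (h.nonneg x).eq_or_lt with hx | hx
  · rw [← hx]
    positivity
  have hxcl := subset_closure (h.mem_of_pos hx).1
  obtain ⟨w, -, hmax⟩ := hb.isCompact_closure.exists_isMaxOn ⟨x, hxcl⟩ h.1
  have hw : 0 < φ w := hx.trans_le (hmax hxcl)
  have hle : ∀ z, φ z ≤ φ w := fun z ↦ by
    rcases (h.nonneg z).eq_or_lt with hz | hz
    · exact hz ▸ hw.le
    · exact hmax (subset_closure (h.mem_of_pos hz).1)
  have hdiam := (h.isTorsionSubsol hΩ hp₀ hle).le_diam_sq hΩ hb (Real.rpow_nonneg hw.le p) w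
  rw [finrank_euclideanSpace_fin, mul_div_assoc] at hdiam
  exact (hle x).trans (le_rpow_inv_of_le_rpow_mul hw hp₁ hdiam)

theorem sub_le_bubbleSum (h : IsEVSol n Ω ε a p φ) (hn : 2 ≤ n) (hΩ : IsOpen Ω) (hε : 0 < ε)
    (ha : 0 < a) (hp : 0 ≤ p) (hM : ∀ x, φ x ≤ M) {r : ℝ} (hr : 0 < r) (hxy : dist x y ≤ 2 * r)
    (hB : closedBall (midpoint ℝ x y) r ⊆ Ω) (hm : m ∈ latticePts n ε) {N : ℕ}
    (hN : dist (midpoint ℝ x y) m + r + a ≤ N * ε) :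
    φ x - φ y ≤ M * bubbleSum ε a m N y + M / r ^ 2 * (dist x y / 2) ^ 2 +
      (n * (M / r ^ 2) + M ^ p / 2) * (r * (dist x y / 2)) := by
  have : NeZero n := ⟨by lia⟩
  have hM₀ : 0 ≤ M := (h.nonneg x).trans (hM x)
  have hsuper : ∀ z, 0 < φ z → Δ φ z ≤ 0 := fun z hz ↦ by
    rw [h.laplacian_eq hΩ hz]
    exact neg_nonpos.2 (Real.rpow_nonneg hz.le p)
  have hW : ∀ z ∈ closedBall (midpoint ℝ x y) r, φ z = 0 → 1 ≤ bubbleSum ε a m N z :=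
    fun z hz hφz ↦ one_le_bubbleSum hn hε ha hm (h.mem_holes_of_eq_zero (hB hz) hφz) <| by
      linarith [dist_triangle z (midpoint ℝ x y) m, mem_closedBall.1 hz]
  simpa only [finrank_euclideanSpace_fin] using
    (h.isTorsionSubsol hΩ hp hM).sub_le_of_superharmonic h.nonneg hM hsuper
      (Real.rpow_nonneg hM₀ p) hr hxy hB (contDiff_bubbleSum ha) (fun _ ↦ bubbleSum_nonneg)
      (fun _ ↦ laplacian_bubbleSum_nonpos hn ha) hW

end IsEVSol

end EigenvalueProblem

section OscillationAnnulus

namespace IsEVSol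

variable {n : ℕ} {Ω : Set (Eucl n)} {ε p M L δ : ℝ} {φ : Eucl n → ℝ} {x y m : Eucl n}

theorem sub_le_of_closedBall_subset (h : IsEVSol n Ω ε (aStar n ε) p φ) (hn : 3 ≤ n)
    (hΩ : IsOpen Ω) (hp : 0 ≤ p) (hM : ∀ x, φ x ≤ M) (hδ : 0 < δ) (hδ₁ : δ ≤ 1) (hδε : δ ^ n = ε)
    (hm : m ∈ latticePts n ε) (hx : dist x m ≤ ε / 2) (hy : dist y m ≤ ε / 2)
    (hy' : √(ε * aStar n ε / 2) ≤ dist y m)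
    (hB : closedBall (midpoint ℝ x y) (δ ^ (n - 1)) ⊆ Ω) :
    φ x - φ y ≤ (M * (4 ^ ((n - 2) / 2 : ℝ) + 9 ^ n * 8 ^ ((n - 2) / 2 : ℝ)) +
      (n + 1) * M + M ^ p) * δ := by
  have hM₀ : 0 ≤ M := (h.nonneg x).trans (hM x)
  set B : ℝ := 4 ^ ((n - 2) / 2 : ℝ) + 9 ^ n * 8 ^ ((n - 2) / 2 : ℝ)
  set r := δ ^ (n - 1)
  have hr : 0 < r := pow_pos hδ _
  have hr₁ : r ≤ 1 := pow_le_one₀ hδ.le hδ₁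
  have hrδ : r * δ = ε := (pow_sub_one_mul (by lia) δ).trans hδε
  have hε : 0 < ε := hrδ ▸ mul_pos hr hδ
  have hεδ : ε ≤ δ := hrδ ▸ mul_le_of_le_one_left hδ.le hr₁
  have hεr : ε ≤ r := hrδ ▸ mul_le_of_le_one_right hr.le hδ₁
  have hd : dist x y / 2 ≤ ε := by
    linarith [dist_triangle_right x y m]
  have hmid : dist (midpoint ℝ x y) m ≤ ε / 2 :=
    (convex_closedBall m (ε / 2)).midpoint_mem hx hy
  have hN : dist (midpoint ℝ x y) m + r + aStar n ε ≤ (⌈δ⁻¹⌉₊ + 2 : ℕ) * ε := by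
    have hrε : r = δ⁻¹ * ε := by rw [← hrδ]; field_simp
    have hceil : δ⁻¹ * ε ≤ ⌈δ⁻¹⌉₊ * ε := by gcongr; exact Nat.le_ceil _
    push_cast
    linarith [aStar_le hn hε (hεδ.trans hδ₁)]
  calc φ x - φ y
      ≤ M * bubbleSum ε (aStar n ε) m (⌈δ⁻¹⌉₊ + 2) y + M / r ^ 2 * (dist x y / 2) ^ 2 +
          (n * (M / r ^ 2) + M ^ p / 2) * (r * (dist x y / 2)) :=
        h.sub_le_bubbleSum (by lia) hΩ hε (aStar_pos hε) hp hM hr (by linarith) hB hm hN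
    _ ≤ M * (B * ε) + M / r ^ 2 * ε ^ 2 + (n * (M / r ^ 2) + M ^ p / 2) * (r * ε) := by
        gcongr
        exact bubbleSum_aStar_natCeil_le hn hδ hδ₁ hδε hy hy'
    _ = M * B * ε + M * δ ^ 2 + n * M * δ + M ^ p / 2 * (r * ε) := by
        rw [← hrδ]
        field_simp
        ring
    _ ≤ M * B * δ + M * δ + n * M * δ + M ^ p * δ := by
        gcongr
        · exact pow_le_of_le_one hδ.le hδ₁ two_ne_zero
        · exact half_le_self (by positivity)
        · exact (mul_le_of_le_one_left hε.le hr₁).trans hεδ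
    _ = (M * B + (n + 1) * M + M ^ p) * δ := by ring

theorem sub_le_of_not_closedBall_subset (h : IsEVSol n Ω ε (aStar n ε) p φ) (hn : 2 ≤ n)
    (hL : 0 ≤ L) (hφL : ∀ x, ∀ y ∉ Ω, φ x ≤ L * dist x y) (hδ : 0 < δ) (hδ₁ : δ ≤ 1)
    (hδε : δ ^ n = ε) (hx : dist x m ≤ ε / 2) (hy : dist y m ≤ ε / 2)
    (hB : ¬ closedBall (midpoint ℝ x y) (δ ^ (n - 1)) ⊆ Ω) :
    φ x - φ y ≤ 2 * L * δ := by
  obtain ⟨z, hz, hzΩ⟩ := not_subset.1 hB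
  have hrδ : δ ^ (n - 1) ≤ δ := pow_le_of_le_one hδ.le hδ₁ (by lia)
  have hεδ : ε ≤ δ := hδε ▸ pow_le_of_le_one hδ.le hδ₁ (by lia)
  have hmid : dist x (midpoint ℝ x y) ≤ ε := by
    rw [dist_left_midpoint, Real.norm_ofNat]
    linarith [dist_triangle_right x y m, dist_nonneg (x := x) (y := y)]
  calc φ x - φ y ≤ φ x := sub_le_self _ (h.nonneg y)
    _ ≤ L * dist x z := hφL x z hzΩ
    _ ≤ L * (2 * δ) := by
        gcongr
        linarith [dist_triangle_right x z (midpoint ℝ x y), mem_closedBall.1 hz]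
    _ = 2 * L * δ := by ring

theorem sub_le_max_mul (h : IsEVSol n Ω ε (aStar n ε) p φ) (hn : 3 ≤ n) (hΩ : IsOpen Ω)
    (hp : 0 ≤ p) (hM : ∀ x, φ x ≤ M) (hL : 0 ≤ L) (hφL : ∀ x, ∀ y ∉ Ω, φ x ≤ L * dist x y)
    (hδ : 0 < δ) (hδ₁ : δ ≤ 1) (hδε : δ ^ n = ε) (hm : m ∈ latticePts n ε)
    (hx : x ∈ ball m (ε / 2)) (hy : y ∈ ball m (ε / 2) \ closedBall m √(ε * aStar n ε / 2)) :
    φ x - φ y ≤ max (M * (4 ^ ((n - 2) / 2 : ℝ) + 9 ^ n * 8 ^ ((n - 2) / 2 : ℝ)) +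
      (n + 1) * M + M ^ p) (2 * L) * δ := by
  have hxm : dist x m ≤ ε / 2 := (mem_ball.1 hx).le
  have hym : dist y m ≤ ε / 2 := (mem_ball.1 hy.1).le
  by_cases hB : closedBall (midpoint ℝ x y) (δ ^ (n - 1)) ⊆ Ω
  · refine (h.sub_le_of_closedBall_subset hn hΩ hp hM hδ hδ₁ hδε hm hxm hym
      (not_le.1 hy.2).le hB).trans ?_
    gcongr
    exact le_max_left _ _
  · refine (h.sub_le_of_not_closedBall_subset (by lia) hL hφL hδ hδ₁ hδε hxm hym hB).trans ?_
    gcongr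
    exact le_max_right _ _

end IsEVSol

theorem isLittleO_const_mul_rpow (C : ℝ) {s t : ℝ} (hts : t < s) :
    (fun ε : ℝ ↦ C * ε ^ s) =o[𝓝[>] 0] fun ε ↦ ε ^ t := by
  refine IsLittleO.const_mul_left ((isLittleO_iff_tendsto' ?_).2 ?_) C
  · filter_upwards [self_mem_nhdsWithin] with ε hε hzero
    exact absurd hzero (Real.rpow_pos_of_pos hε t).ne'
  · have hlim : Tendsto (fun ε : ℝ ↦ ε ^ (s - t)) (𝓝[>] 0) (𝓝 0) := by
      have hcont := (Real.continuousAt_rpow_const 0 (s - t) (.inr (sub_nonneg.2 hts.le))).tendsto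
      rw [Real.zero_rpow (sub_pos.2 hts).ne'] at hcont
      exact hcont.mono_left nhdsWithin_le_nhds
    refine hlim.congr' ?_
    filter_upwards [self_mem_nhdsWithin] with ε hε
    exact Real.rpow_sub hε s t

theorem ev_oscillation_annulus_general {n : ℕ} (hn : 3 ≤ n) {Ω : Set (Eucl n)} (hΩ : IsOpen Ω)
    (hb : Bornology.IsBounded Ω) {ρ : ℝ} (hρ : 0 < ρ) (hext : UniformExteriorBall Ω ρ) {p : ℝ}
    (hp₀ : 0 ≤ p) (hp₁ : p < 1) :
    ∃ C, ∀ ε ∈ Ioo (0 : ℝ) 1, ∀ φ, IsEVSol n Ω ε (aStar n ε) p φ → ∀ m ∈ latticePts n ε,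
      ∀ x ∈ ball m (ε / 2) \ closedBall m √(ε * aStar n ε / 2),
      ∀ y ∈ ball m (ε / 2) \ closedBall m √(ε * aStar n ε / 2),
        |φ x - φ y| ≤ C * ε ^ (1 / n : ℝ) := by
  have : NeZero n := ⟨by lia⟩
  set M : ℝ := (diam Ω ^ 2 / (2 * n)) ^ (1 - p)⁻¹
  set L : ℝ := M ^ p * (diam Ω + ρ) ^ (n + 2) / (2 * ρ ^ (n + 1))
  have hM : 0 ≤ M := by positivity
  have hL : 0 ≤ L := by positivity
  refine ⟨max (M * (4 ^ ((n - 2) / 2 : ℝ) + 9 ^ n * 8 ^ ((n - 2) / 2 : ℝ)) + (n + 1) * M + M ^ p)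
    (2 * L), fun ε ⟨hε, hε₁⟩ φ h m hm x hx y hy ↦ ?_⟩
  have hφM : ∀ z, φ z ≤ M := h.le_rpow_inv hΩ hb hp₀ hp₁
  have hφL : ∀ x, ∀ y ∉ Ω, φ x ≤ L * dist x y := fun x y hy ↦ by
    simpa only [finrank_euclideanSpace_fin] using
      (h.isTorsionSubsol hΩ hp₀ hφM).le_mul_dist_of_notMem hΩ hb (Real.rpow_nonneg hM p) hρ hext hy
  have hδ : 0 < ε ^ (1 / n : ℝ) := Real.rpow_pos_of_pos hε _
  have hδ₁ : ε ^ (1 / n : ℝ) ≤ 1 := Real.rpow_le_one hε.le hε₁.le (by positivity)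
  have hδε : (ε ^ (1 / n : ℝ)) ^ n = ε := by
    rw [one_div, Real.rpow_inv_natCast_pow hε.le (NeZero.ne n)]
  exact abs_sub_le_iff.2
    ⟨h.sub_le_max_mul hn hΩ hp₀ hφM hL hφL hδ hδ₁ hδε hm hx.1 hy,
      h.sub_le_max_mul hn hΩ hp₀ hφM hL hφL hδ hδ₁ hδε hm hy.1 hx⟩

end OscillationAnnulus

/-- almost flatness on annuli: with ā_ε = (ε a*_ε/2)^{1/2}, there is
0 < γ̃ < 1 such that the oscillation of φ_ε over B_{ε/2}(m) \ B_{ā_ε}(m) is o(ε^γ̃) for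
every m ∈ εℤⁿ ∩ Ω. -/
theorem ev_oscillation_annulus
    (n : ℕ) (hn : 3 ≤ n)
    (Ω : Set (Eucl n)) (hΩo : IsOpen Ω) (hΩb : Bornology.IsBounded Ω)
    (hΩc : IsConnected Ω) (hΩs : HasSmoothBoundary Ω)
    (p : ℝ) (hp0 : 0 < p) (hp1 : p < 1)
    (Φ : ℝ → Eucl n → ℝ)
    (hΦ : ∀ ε ∈ Ioo (0:ℝ) 1, IsEVSol n Ω ε (aStar n ε) p (Φ ε))
    :
    ∃ γ : ℝ, 0 < γ ∧ γ < 1 ∧ ∃ η : ℝ → ℝ,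
      η =o[𝓝[>] (0:ℝ)] (fun ε => ε ^ γ) ∧
      ∀ ε ∈ Ioo (0:ℝ) 1, ∀ m ∈ latticePts n ε ∩ Ω,
        ∀ p₁ ∈ ball m (ε / 2) \ closedBall m (Real.sqrt (ε * aStar n ε / 2)),
        ∀ p₂ ∈ ball m (ε / 2) \ closedBall m (Real.sqrt (ε * aStar n ε / 2)),
          |Φ ε p₁ - Φ ε p₂| ≤ η ε := by
  obtain ⟨ρ, hρ, hext⟩ := hΩs.exists_uniformExteriorBall hΩb
  obtain ⟨C, hC⟩ := ev_oscillation_annulus_general hn hΩo hΩb hρ hext hp0.le hp1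
  have hn' : (1 : ℝ) < n := by exact_mod_cast hn.trans' (by norm_num)
  exact ⟨1 / n / 2, by positivity, by rw [div_div, div_lt_one] <;> linarith,
    fun ε ↦ C * ε ^ (1 / n : ℝ), isLittleO_const_mul_rpow C (half_lt_self (by positivity)),
    fun ε hε m hm p₁ hp₁ p₂ hp₂ ↦ hC ε hε (Φ ε) (hΦ ε hε) m hm.1 p₁ hp₁ p₂ hp₂⟩

end
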